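/- arXiv:2310.17735 — 2 statements merged into one kernel-verified Lean document; each statement's English description precedes it below -/
import Mathlib

section
/- Let X, Y, A, B be finite nonempty sets. For a linear map Γ : M_{X×Y} → M_{A×B} the following are equivalent: (i) Γ is a QNS correlation of quantum type, i.e. there exist finite-dimensional complex Hilbert spaces H_A and H_B, stochastic operator matrices Ẽ = (Ẽ_{x,x',a,a'}) over (X,A) acting on H_A and F̃ = (F̃_{y,y',b,b'}) over (Y,B) acting on H_B, and a unit vector ξ ∈ H_A ⊗ H_B such that Γ(ε_{x,x'} ⊗ ε_{y,y'}) = Σ_{a,a'∈A, b,b'∈B} ⟨(Ẽ_{x,x',a,a'} ⊗ F̃_{y,y',b,b'}) ξ, ξ⟩ ε_{a,a'} ⊗ ε_{b,b'} for all x,x' ∈ X and y,y' ∈ Y; (ii) there exist finite-dimensional complex Hilbert spaces H_A, K_A, H_B, K_B, block operator isometries U = (U_{a,x}) over (X,A) with entries in B(H_A,K_A) and V = (V_{b,y}) over (Y,B) with entries in B(H_B,K_B), and a density operator σ on H_A ⊗ H_B, such that Γ(ε_{x,x'} ⊗ ε_{y,y'}) = Σ_{a,a'∈A, b,b'∈B}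 Tr(σ (U_{a,x}* U_{a',x'} ⊗ V_{b,y}* V_{b',y'})) ε_{a,a'} ⊗ ε_{b,b'}. -/
open Matrix
open scoped Kronecker ComplexOrder

/-- A stochastic operator matrix over `(X, A)` acting on `ℂ^d`, given as a family of
`d × d` matrices: the associated block matrix on `ℂ^{X×A} ⊗ ℂ^d` is positive
semidefinite and the partial trace over `A` is the identity. -/
def IsStochasticMatrixFam {X A : Type*} [Fintype X] [Fintype A] [DecidableEq X]
    {d : ℕ} (E : X → X → A → A → Matrix (Fin d) (Fin d) ℂ) : Prop :=
  (Matrix.PosSemidef (Matrix.of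
      (fun (p q : (X × A) × Fin d) => E p.1.1 q.1.1 p.1.2 q.1.2 p.2 q.2))) ∧
  (∀ x x' : X, ∑ a : A, E x x' a a = if x = x' then 1 else 0)

/-- A block operator isometry over `(X, A)` with finite-dimensional entries,
given as a family of `k × d` matrices. -/
def IsBlockIsometryFam {X A : Type*} [Fintype A] [DecidableEq X]
    {d k : ℕ} (U : A → X → Matrix (Fin k) (Fin d) ℂ) : Prop :=
  ∀ x x' : X, ∑ a : A, (U a x)ᴴ * (U a x') = if x = x' then 1 else 0

/-!
A stochastic operator matrix is positive, so it factors as `U* U`, and the partial trace condition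
says precisely that the blocks of `U` form a block operator isometry. The two descriptions thus
differ only in the state, pure on one side and mixed on the other. Writing a density operator as
`σ = C Cᴴ`, the vector `vec C` is a purification of it, and the enlarged Hilbert space is absorbed
by replacing one of the two stochastic operator matrices, `E`, by `1 ⊗ E`.
-/

section States

variable {𝕜 n : Type*} [RCLike 𝕜]

theorem posSemidef_iff_exists_fin_eq_mul_conjTranspose [Finite n] {M : Matrix n n 𝕜} :
    M.PosSemidef ↔ ∃ (r : ℕ) (C : Matrix n (Fin r) 𝕜), M = C * Cᴴ := by
  refine ⟨fun hM => ?_, ?_⟩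
  · obtain ⟨r, v, rfl⟩ := posSemidef_iff_eq_sum_vecMulVec.mp hM
    refine ⟨r, (of v)ᵀ, ?_⟩
    ext i j
    simp [Matrix.sum_apply, mul_apply, vecMulVec_apply]
  · rintro ⟨r, C, rfl⟩
    exact posSemidef_self_mul_conjTranspose C

variable [Fintype n]

theorem star_dotProduct_self_eq_sum_norm_sq (ξ : n → 𝕜) :
    star ξ ⬝ᵥ ξ = ((∑ i, ‖ξ i‖ ^ 2 : ℝ) : 𝕜) := by
  simp [dotProduct, RCLike.conj_mul]

theorem trace_vecMulVec_star_mul {R : Type*} [CommSemiring R] [Star R] (ξ : n → R)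
    (M : Matrix n n R) :
    (vecMulVec ξ (star ξ) * M).trace = star ξ ⬝ᵥ (M *ᵥ ξ) := by
  rw [vecMulVec_mul, trace_vecMulVec, dotProduct_comm, dotProduct_mulVec]

theorem star_comp_dotProduct_submatrix_mulVec_comp {R : Type*} [NonUnitalNonAssocSemiring R]
    [Star R] {m : Type*} [Fintype m] (e : m ≃ n) (M : Matrix n n R) (ξ : n → R) :
    star (ξ ∘ e) ⬝ᵥ (M.submatrix e e *ᵥ (ξ ∘ e)) = star ξ ⬝ᵥ (M *ᵥ ξ) := by
  rw [submatrix_mulVec_equiv, Function.comp_assoc, e.self_comp_symm, Function.comp_id]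
  exact comp_equiv_dotProduct_comp_equiv (star ξ) (M *ᵥ ξ) e

theorem star_vec_dotProduct_one_kronecker_mulVec_vec {R : Type*} [CommSemiring R] [Star R]
    {r : Type*} [Fintype r] [DecidableEq r] (C : Matrix n r R) (M : Matrix n n R) :
    star (vec C) ⬝ᵥ ((1 ⊗ₖ M) *ᵥ vec C) = (C * Cᴴ * M).trace := by
  rw [← vec_mul_eq_mulVec, star_vec_dotProduct_vec, ← Matrix.mul_assoc, trace_mul_cycle]

end States

section Ampliation

variable {R : Type*} [Semiring R] {d : ℕ}

/-- The ampliation `1 ⊗ M` of a `d × d` matrix `M`, with `R ^ r ⊗ R ^ d` identified with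
`R ^ (r * d)`. -/
def ampliation (r : ℕ) (M : Matrix (Fin d) (Fin d) R) :
    Matrix (Fin (r * d)) (Fin (r * d)) R :=
  (1 ⊗ₖ M).submatrix finProdFinEquiv.symm finProdFinEquiv.symm

theorem ampliation_zero (r : ℕ) : ampliation r (0 : Matrix (Fin d) (Fin d) R) = 0 := by
  simp [ampliation]

theorem ampliation_one (r : ℕ) : ampliation r (1 : Matrix (Fin d) (Fin d) R) = 1 := by
  simp [ampliation]

theorem ampliation_sum {ι : Type*} (r : ℕ) (s : Finset ι) (M : ι → Matrix (Fin d) (Fin d) R) :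
    ampliation r (∑ i ∈ s, M i) = ∑ i ∈ s, ampliation r (M i) := by
  ext i j
  simp [ampliation, Matrix.sum_apply, Finset.mul_sum]

variable {𝕜 n : Type*} [RCLike 𝕜] [Fintype n]

/-- `ξ` is a purification of the state `σ` on `𝕜 ^ d ⊗ 𝕜 ^ n`, with ancilla `𝕜 ^ r` tensored onto
the first factor. This is expressed by expectation values of product observables, which determine
the partial trace of `ξ ξ*` over the ancilla. -/
def IsPurification {r : ℕ} (σ : Matrix (Fin d × n) (Fin d × n) 𝕜) (ξ : Fin (r * d) × n → 𝕜) :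
    Prop :=
  ∀ (S : Matrix (Fin d) (Fin d) 𝕜) (T : Matrix n n 𝕜),
    star ξ ⬝ᵥ ((ampliation r S ⊗ₖ T) *ᵥ ξ) = (σ * (S ⊗ₖ T)).trace

theorem exists_isPurification {σ : Matrix (Fin d × n) (Fin d × n) 𝕜} (hσ : σ.PosSemidef) :
    ∃ (r : ℕ) (ξ : Fin (r * d) × n → 𝕜), IsPurification σ ξ := by
  obtain ⟨r, C, rfl⟩ := posSemidef_iff_exists_fin_eq_mul_conjTranspose.mp hσ
  let e : Fin (r * d) × n ≃ Fin r × Fin d × n :=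
    (finProdFinEquiv.symm.prodCongr (.refl n)).trans (.prodAssoc (Fin r) (Fin d) n)
  refine ⟨r, vec C ∘ e, fun S T => ?_⟩
  have ampliation_kronecker : ampliation r S ⊗ₖ T = (1 ⊗ₖ (S ⊗ₖ T)).submatrix e e := by
    rw [← kronecker_assoc', ampliation, kroneckerMap_submatrix_left]
    rfl
  rw [ampliation_kronecker, star_comp_dotProduct_submatrix_mulVec_comp,
    star_vec_dotProduct_one_kronecker_mulVec_vec]

theorem IsPurification.sum_norm_sq_eq_trace {r : ℕ} {σ : Matrix (Fin d × n) (Fin d × n) 𝕜}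
    {ξ : Fin (r * d) × n → 𝕜} (hξ : IsPurification σ ξ) :
    ((∑ i, ‖ξ i‖ ^ 2 : ℝ) : 𝕜) = σ.trace := by
  classical
  simpa only [ampliation_one, one_kronecker_one, one_mulVec, Matrix.mul_one,
    star_dotProduct_self_eq_sum_norm_sq] using hξ 1 1

end Ampliation

section OperatorFamilies

variable {X A : Type*} [Fintype X] [Fintype A] [DecidableEq X] {d : ℕ}

theorem IsBlockIsometryFam.isStochasticMatrixFam {k : ℕ} {U : A → X → Matrix (Fin k) (Fin d) ℂ}
    (hU : IsBlockIsometryFam U) :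
    IsStochasticMatrixFam fun x x' a a' => (U a x)ᴴ * U a' x' :=
  ⟨posSemidef_conjTranspose_mul_self
    (of fun (i : Fin k) (p : (X × A) × Fin d) => U p.1.2 p.1.1 i p.2), hU⟩

namespace IsStochasticMatrixFam

variable {E : X → X → A → A → Matrix (Fin d) (Fin d) ℂ}

theorem exists_isBlockIsometryFam (hE : IsStochasticMatrixFam E) :
    ∃ (k : ℕ) (U : A → X → Matrix (Fin k) (Fin d) ℂ), IsBlockIsometryFam U ∧
      ∀ x x' a a', E x x' a a' = (U a x)ᴴ * U a' x' := by
  obtain ⟨k, C, hC⟩ := posSemidef_iff_exists_fin_eq_mul_conjTranspose.mp hE.1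
  let U (a : A) (x : X) : Matrix (Fin k) (Fin d) ℂ := (C.submatrix (Prod.mk (x, a)) id)ᴴ
  have hEU (x x' : X) (a a' : A) : E x x' a a' = (U a x)ᴴ * U a' x' :=
    calc E x x' a a' = (C * Cᴴ).submatrix (Prod.mk (x, a)) (Prod.mk (x', a')) := by
          rw [← hC]
          rfl
      _ = (U a x)ᴴ * U a' x' := by
          rw [conjTranspose_conjTranspose]
          rfl
  refine ⟨k, U, fun x x' => ?_, hEU⟩
  simp only [← hEU, hE.2]

theorem map_ampliation (hE : IsStochasticMatrixFam E) (r : ℕ) :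
    IsStochasticMatrixFam fun x x' a a' => ampliation r (E x x' a a') := by
  refine ⟨?_, fun x x' => ?_⟩
  · exact (PosSemidef.one.kronecker hE.1).submatrix fun p : (X × A) × Fin (r * d) =>
      ((finProdFinEquiv.symm p.2).1, p.1, (finProdFinEquiv.symm p.2).2)
  · rw [← ampliation_sum, hE.2]
    split_ifs
    · exact ampliation_one r
    · exact ampliation_zero r

end IsStochasticMatrixFam

end OperatorFamilies

/-- Equivalence of the two descriptions of QNS correlations of
quantum type: via tensor products of stochastic operator matrices and a unit vector,
and via block operator isometries and a density operator. -/
theorem statement10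
    {X Y A B : Type} [Fintype X] [Fintype Y] [Fintype A] [Fintype B]
    [Nonempty X] [Nonempty Y] [Nonempty A] [Nonempty B]
    [DecidableEq X] [DecidableEq Y] [DecidableEq A] [DecidableEq B]
    (Γ : Matrix (X × Y) (X × Y) ℂ →ₗ[ℂ] Matrix (A × B) (A × B) ℂ) :
    (∃ (dA dB : ℕ)
        (E : X → X → A → A → Matrix (Fin dA) (Fin dA) ℂ)
        (F : Y → Y → B → B → Matrix (Fin dB) (Fin dB) ℂ)
        (ξ : Fin dA × Fin dB → ℂ),
        IsStochasticMatrixFam E ∧ IsStochasticMatrixFam F ∧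
        (∑ i, ‖ξ i‖ ^ 2 = 1) ∧
        (∀ (x x' : X) (y y' : Y),
          Γ ((Matrix.single x x' (1 : ℂ)) ⊗ₖ (Matrix.single y y' (1 : ℂ)))
            = Matrix.of fun p q =>
                dotProduct (star ξ) ((E x x' p.1 q.1 ⊗ₖ F y y' p.2 q.2).mulVec ξ)))
    ↔
    (∃ (dA kA dB kB : ℕ)
        (U : A → X → Matrix (Fin kA) (Fin dA) ℂ)
        (V : B → Y → Matrix (Fin kB) (Fin dB) ℂ)
        (σ : Matrix (Fin dA × Fin dB) (Fin dA × Fin dB) ℂ),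
        IsBlockIsometryFam U ∧ IsBlockIsometryFam V ∧
        σ.PosSemidef ∧ σ.trace = 1 ∧
        (∀ (x x' : X) (y y' : Y),
          Γ ((Matrix.single x x' (1 : ℂ)) ⊗ₖ (Matrix.single y y' (1 : ℂ)))
            = Matrix.of fun p q =>
                Matrix.trace (σ * (((U p.1 x)ᴴ * U q.1 x') ⊗ₖ ((V p.2 y)ᴴ * V q.2 y'))))) := by
  constructor
  · rintro ⟨dA, dB, E, F, ξ, hE, hF, hξ, hΓ⟩
    obtain ⟨kA, U, hU, hEU⟩ := hE.exists_isBlockIsometryFam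
    obtain ⟨kB, V, hV, hFV⟩ := hF.exists_isBlockIsometryFam
    refine ⟨dA, kA, dB, kB, U, V, vecMulVec ξ (star ξ), hU, hV,
      posSemidef_vecMulVec_self_star ξ, ?_, fun x x' y y' => ?_⟩
    · rw [trace_vecMulVec, dotProduct_comm, star_dotProduct_self_eq_sum_norm_sq, hξ]
      exact RCLike.ofReal_one
    · simp only [hΓ, hEU, hFV, trace_vecMulVec_star_mul]
  · rintro ⟨dA, kA, dB, kB, U, V, σ, hU, hV, hσ, hσ_trace, hΓ⟩
    obtain ⟨r, ξ, hξ⟩ := exists_isPurification hσ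
    refine ⟨r * dA, dB, _, _, ξ, hU.isStochasticMatrixFam.map_ampliation r,
      hV.isStochasticMatrixFam, ?_, fun x x' y y' => ?_⟩
    · exact Complex.ofReal_eq_one.mp (hξ.sum_norm_sq_eq_trace.trans hσ_trace)
    · simp only [hΓ, hξ _ _]
end

section
/- Let X, Y, A, B be finite nonempty sets, let H_R be a separable complex Hilbert space, let ξ ∈ ℂ^{X×Y} ⊗ H_R be a unit vector, and let P be an orthogonal projection on ℂ^{A×B} ⊗ H_R of finite rank n ≥ 1. Define, for a class 𝒞 of linear maps M_{X×Y} → M_{A×B}, the value ω_𝒞(ξ,P) = sup_{Γ∈𝒞} Tr((Γ ⊗ id)(ξξ*) P), where (Γ ⊗ id)(ξξ*) is the (finite-rank) operator obtained by applying Γ to the M_{X×Y} leg of the rank-one operator ξξ*. Then ω_{Q_qc}(ξ,P) ≤ 4n · ω_{Q_q}(ξ,P), where Q_qc and Q_q denote the quantum commuting and quantum QNS correlation classes over (X,Y,A,B). -/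
open Matrix ContinuousLinearMap
open scoped Kronecker ComplexOrder ComplexInnerProductSpace

/-- A bundled complex Hilbert space. -/
structure HilbertC : Type 1 where
  carrier : Type
  [nacg : NormedAddCommGroup carrier]
  [ips : InnerProductSpace ℂ carrier]
  [cs : CompleteSpace carrier]

attribute [instance] HilbertC.nacg HilbertC.ips HilbertC.cs

/-- A stochastic operator matrix over `(X, A)` acting on a Hilbert space `H`. -/
def IsStochasticOperatorMatrix {X A : Type*} [Fintype X] [Fintype A] [DecidableEq X]
    {H : Type*} [NormedAddCommGroup H] [InnerProductSpace ℂ H]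
    (E : X → X → A → A → (H →L[ℂ] H)) : Prop :=
  (∀ ξ : X × A → H,
    0 ≤ ∑ p : X × A, ∑ q : X × A, (⟪ξ p, (E p.1 q.1 p.2 q.2) (ξ q)⟫ : ℂ)) ∧
  (∀ x x' : X, ∑ a : A, E x x' a a = if x = x' then 1 else 0)

/-- Quantum commuting QNS correlations over `(X, Y, A, B)`. -/
def IsQCCorrelation {X Y A B : Type} [Fintype X] [Fintype Y] [Fintype A] [Fintype B]
    [DecidableEq X] [DecidableEq Y]
    (Γ : Matrix (X × Y) (X × Y) ℂ →ₗ[ℂ] Matrix (A × B) (A × B) ℂ) : Prop :=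
  ∃ (ℍ : HilbertC) (ξ : ℍ.carrier)
    (E : X → X → A → A → (ℍ.carrier →L[ℂ] ℍ.carrier))
    (F : Y → Y → B → B → (ℍ.carrier →L[ℂ] ℍ.carrier)),
    ‖ξ‖ = 1 ∧
    IsStochasticOperatorMatrix E ∧ IsStochasticOperatorMatrix F ∧
    (∀ (x x' : X) (y y' : Y) (a a' : A) (b b' : B),
      Commute (E x x' a a') (F y y' b b')) ∧
    (∀ (x x' : X) (y y' : Y),
      Γ ((Matrix.single x x' (1 : ℂ)) ⊗ₖ (Matrix.single y y' (1 : ℂ)))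
        = Matrix.of fun p q => (⟪ξ, ((E x x' p.1 q.1) ∘L (F y y' p.2 q.2)) ξ⟫ : ℂ))

/-- QNS correlations of quantum type over `(X, Y, A, B)`. -/
def IsQCorrelation {X Y A B : Type} [Fintype X] [Fintype Y] [Fintype A] [Fintype B]
    [DecidableEq X] [DecidableEq Y]
    (Γ : Matrix (X × Y) (X × Y) ℂ →ₗ[ℂ] Matrix (A × B) (A × B) ℂ) : Prop :=
  ∃ (dA dB : ℕ)
    (E : X → X → A → A → Matrix (Fin dA) (Fin dA) ℂ)
    (F : Y → Y → B → B → Matrix (Fin dB) (Fin dB) ℂ)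
    (ξ : Fin dA × Fin dB → ℂ),
    IsStochasticMatrixFam E ∧ IsStochasticMatrixFam F ∧
    (∑ i, ‖ξ i‖ ^ 2 = 1) ∧
    (∀ (x x' : X) (y y' : Y),
      Γ ((Matrix.single x x' (1 : ℂ)) ⊗ₖ (Matrix.single y y' (1 : ℂ)))
        = Matrix.of fun p q =>
            dotProduct (star ξ) ((E x x' p.1 q.1 ⊗ₖ F y y' p.2 q.2).mulVec ξ))

/-- The quantity `Tr((Γ ⊗ id)(ξξ*) P)` where `P = Σ_k γ_k γ_k*`. -/
noncomputable def gameValue {X Y A B : Type} [Fintype X] [Fintype Y] [Fintype A] [Fintype B]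
    [DecidableEq X] [DecidableEq Y]
    {HR : Type*} [NormedAddCommGroup HR] [InnerProductSpace ℂ HR]
    (Γ : Matrix (X × Y) (X × Y) ℂ →ₗ[ℂ] Matrix (A × B) (A × B) ℂ)
    (ξ : X × Y → HR) (n : ℕ) (γ : Fin n → (A × B → HR)) : ℂ :=
  ∑ k : Fin n, ∑ p : A × B, ∑ q : A × B, ∑ w : X × Y, ∑ w' : X × Y,
    (Γ (Matrix.single w w' (1 : ℂ))) p q
      * (⟪ξ w', γ k q⟫ : ℂ) * (⟪γ k p, ξ w⟫ : ℂ)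

/-!
The value of a strategy in the game of a single answer vector `γ` is the quadratic form of its Choi
matrix at the vector `g` of overlaps `⟪ξ, γ⟫`. Factoring the stochastic operator matrices of a
quantum commuting strategy as `E = V* V` and `F = W* W`, where all blocks of `V` commute with those
of `W`, turns this form into the square of a linear functional `g · C` evaluated at a matrix `C` of
numbers `∑ ⟪R, V_i W_j ψ⟫`. Reading the product as `V_i W_j` and as `W_j V_i` bounds `C` by Gram
matrices in two ways, which makes `C` a feasible point of a semidefinite relaxation.

The relaxation is rounded as in the operator space Grothendieck inequality. Let `J` bound `|g · C|`
over the amplitudes produced by local contractions sharing an entangled state, and let `N` be its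
maximum over the feasible points. Diagonalising the certificates of a feasible `C` writes it as an
amplitude in which the local operators `S`, `S'` are sums of qubit ladder operators and the
shared state has the corresponding product weights. These operators are not contractions, but their
fourth moments are controlled. On the line `Re z = -1` the analytic family `S |S| ^ z` consists
of contractions, so the functional is at most `J`; on the line `Re z = 1` the amplitude is twice
a feasible point, so it is at most `2 N`. Three lines at `z = 0` gives `N ^ 2 ≤ 2 N J`, so
`N ≤ 2 J`.

A contraction `S` is completed by `1 - S* S` to a stochastic operator matrix, whence `J ^ 2` is at
most the quantum value. Each of the `n` answer vectors thus contributes at most `4` times that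
value.
-/

section

open scoped MatrixOrder

/-! ### Three lines and singular powers -/

section ThreeLines

theorem norm_sum_le_sqrt_of_norm_sum_cpow_le {κ : Type*} [Fintype κ] (c : κ → ℂ) {a : κ → ℝ}
    (ha : ∀ k, 0 < a k) {J K : ℝ}
    (hJ : ∀ z : ℂ, z.re = -1 → ‖∑ k, c k * (a k : ℂ) ^ z‖ ≤ J)
    (hK : ∀ z : ℂ, z.re = 1 → ‖∑ k, c k * (a k : ℂ) ^ z‖ ≤ K) :
    ‖∑ k, c k‖ ≤ √(J * K) := by
  set f : ℂ → ℂ := fun z => ∑ k, c k * (a k : ℂ) ^ z with hf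
  have hdiff : Differentiable ℂ f := Differentiable.fun_sum fun k _ =>
    (differentiable_id.const_cpow
      (Or.inl (Complex.ofReal_ne_zero.2 (ha k).ne'))).const_mul (c k)
  have hbdd : BddAbove ((norm ∘ f) '' Complex.HadamardThreeLines.verticalClosedStrip (-1) 1) := by
    have hcont : Continuous fun r : ℝ => ∑ k, ‖c k‖ * a k ^ r :=
      continuous_finsetSum _ fun k _ =>
        (Real.continuous_const_rpow (ha k).ne').const_mul _
    obtain ⟨B, hB⟩ := (isCompact_Icc.image hcont : IsCompact (_ '' Set.Icc (-1 : ℝ) 1)).bddAbove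
    refine ⟨B, ?_⟩
    rintro _ ⟨z, hz, rfl⟩
    refine le_trans ((norm_sum_le _ _).trans (Finset.sum_le_sum fun k _ => ?_))
      (hB ⟨z.re, hz, rfl⟩)
    rw [norm_mul, Complex.norm_cpow_eq_rpow_re_of_pos (ha k)]
  have hinterp := Complex.HadamardThreeLines.norm_le_interp_of_mem_verticalClosedStrip'
    (show (-1 : ℝ) < 1 by norm_num) (z := 0)
    (show (0 : ℂ).re ∈ Set.Icc (-1 : ℝ) 1 by simp) hdiff.diffContOnCl hbdd hJ hK
  have hJ0 : 0 ≤ J := (norm_nonneg _).trans (hJ (-1) (by simp))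
  have hhalf : (1 : ℝ) - ((0 : ℂ).re - -1) / (1 - -1) = 1 / 2 ∧
      ((0 : ℂ).re - -1) / (1 - -1) = (1 / 2 : ℝ) := by norm_num
  rw [hhalf.1, hhalf.2, ← Real.sqrt_eq_rpow, ← Real.sqrt_eq_rpow, ← Real.sqrt_mul hJ0] at hinterp
  simpa only [hf, Complex.cpow_zero, mul_one] using hinterp

end ThreeLines

section SingularPowers

variable {α β α' β' : Type*} [Fintype α] [Fintype β] [DecidableEq β]

/-- The eigenvalues of `Mᴴ * M`, that is, the squares of the singular values of `M`. -/
noncomputable def gramEigenvalue (M : Matrix α β ℂ) : β → ℝ :=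
  (isHermitian_conjTranspose_mul_self M).eigenvalues

/-- The spectral calculus of `Mᴴ * M`: the matrix with eigenvalues `c` in the orthonormal
eigenbasis of `Mᴴ * M` chosen by Mathlib. -/
noncomputable def spectralDiagonal (M : Matrix α β ℂ) (c : β → ℂ) : Matrix β β ℂ :=
  Unitary.conjStarAlgAut ℂ _ (isHermitian_conjTranspose_mul_self M).eigenvectorUnitary
    (diagonal c)

/-- The singular values of `M`, in the order of the eigenvalues of `Mᴴ * M`. Zero singular values
are replaced by `1` so that complex powers are available; this is harmless because `M` vanishes on
the corresponding eigenvectors. -/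
noncomputable def positiveSingularValue (M : Matrix α β ℂ) (k : β) : ℝ :=
  if gramEigenvalue M k = 0 then 1 else √(gramEigenvalue M k)

/-- The summand of the singular value decomposition of `M` along the `k`-th eigenvector of
`Mᴴ * M`. -/
noncomputable def singularComponent (M : Matrix α β ℂ) (k : β) : Matrix α β ℂ :=
  M * spectralDiagonal M (Pi.single k 1)

/-- The analytic family `z ↦ M |M| ^ z` through `M`, where `|M| ^ 2 = Mᴴ * M`. -/
noncomputable def singularPower (M : Matrix α β ℂ) (z : ℂ) : Matrix α β ℂ :=
  M * spectralDiagonal M fun k => (positiveSingularValue M k : ℂ) ^ z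

theorem conjTranspose_spectralDiagonal (M : Matrix α β ℂ) (c : β → ℂ) :
    (spectralDiagonal M c)ᴴ = spectralDiagonal M (star c) := by
  rw [spectralDiagonal, ← star_eq_conjTranspose, ← map_star, star_eq_conjTranspose,
    diagonal_conjTranspose, spectralDiagonal]

theorem spectralDiagonal_mul (M : Matrix α β ℂ) (c c' : β → ℂ) :
    spectralDiagonal M c * spectralDiagonal M c' = spectralDiagonal M (c * c') := by
  rw [spectralDiagonal, spectralDiagonal, ← map_mul, diagonal_mul_diagonal, spectralDiagonal]
  rfl

theorem spectralDiagonal_sub (M : Matrix α β ℂ) (c c' : β → ℂ) :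
    spectralDiagonal M (c - c') = spectralDiagonal M c - spectralDiagonal M c' := by
  rw [spectralDiagonal, spectralDiagonal, spectralDiagonal, ← map_sub, diagonal_sub]
  rfl

theorem spectralDiagonal_zero (M : Matrix α β ℂ) : spectralDiagonal M 0 = 0 := by
  rw [spectralDiagonal, diagonal_zero', map_zero]

theorem spectralDiagonal_one (M : Matrix α β ℂ) : spectralDiagonal M 1 = 1 := by
  rw [spectralDiagonal, diagonal_one', map_one]

theorem spectralDiagonal_eq_sum (M : Matrix α β ℂ) (c : β → ℂ) :
    spectralDiagonal M c = ∑ k, c k • spectralDiagonal M (Pi.single k 1) := by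
  simp only [spectralDiagonal, ← map_smul, ← map_sum, ← diagonal_smul]
  congr 1
  ext i j
  by_cases hij : i = j <;>
    simp [Matrix.sum_apply, hij, Pi.single_apply]

theorem spectralDiagonal_mono (M : Matrix α β ℂ) {c c' : β → ℂ} (h : c ≤ c') :
    spectralDiagonal M c ≤ spectralDiagonal M c' := by
  have hdiag : (diagonal (c' - c)).PosSemidef :=
    PosSemidef.diagonal (sub_nonneg.2 h)
  rw [Matrix.le_iff, ← spectralDiagonal_sub, spectralDiagonal, Unitary.conjStarAlgAut_apply]
  exact hdiag.mul_mul_conjTranspose_same _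

theorem conjTranspose_mul_self_eq_spectralDiagonal (M : Matrix α β ℂ) :
    Mᴴ * M = spectralDiagonal M fun k => (gramEigenvalue M k : ℂ) :=
  (isHermitian_conjTranspose_mul_self M).spectral_theorem

theorem gramEigenvalue_nonneg (M : Matrix α β ℂ) (k : β) : 0 ≤ gramEigenvalue M k :=
  (posSemidef_conjTranspose_mul_self M).eigenvalues_nonneg k

theorem positiveSingularValue_pos (M : Matrix α β ℂ) (k : β) : 0 < positiveSingularValue M k := by
  rw [positiveSingularValue]
  split_ifs with h
  · exact one_pos
  · exact Real.sqrt_pos.2 ((gramEigenvalue_nonneg M k).lt_of_ne' h)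

theorem sq_positiveSingularValue (M : Matrix α β ℂ) {k : β}
    (h : gramEigenvalue M k ≠ 0) :
    positiveSingularValue M k ^ 2 = gramEigenvalue M k := by
  rw [positiveSingularValue, if_neg h, Real.sq_sqrt (gramEigenvalue_nonneg M k)]

theorem star_cpow_mul_cpow_of_pos {s : ℝ} (hs : 0 < s) (z : ℂ) :
    star ((s : ℂ) ^ z) * (s : ℂ) ^ z = ((s ^ z.re) ^ 2 : ℝ) := by
  rw [Complex.star_def, Complex.conj_mul', Complex.norm_cpow_eq_rpow_re_of_pos hs]
  push_cast
  rfl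

theorem conjTranspose_mul_self_mul_spectralDiagonal (M : Matrix α β ℂ) (c : β → ℂ) :
    (M * spectralDiagonal M c)ᴴ * (M * spectralDiagonal M c) = spectralDiagonal M fun k =>
      star (c k) * c k * (gramEigenvalue M k : ℂ) := by
  rw [conjTranspose_mul, conjTranspose_spectralDiagonal, Matrix.mul_assoc,
    ← Matrix.mul_assoc Mᴴ, conjTranspose_mul_self_eq_spectralDiagonal, spectralDiagonal_mul,
    spectralDiagonal_mul]
  congr 1
  ext k
  simp only [Pi.mul_apply, Pi.star_apply]
  ring

theorem mul_spectralDiagonal_congr (M : Matrix α β ℂ) {c c' : β → ℂ}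
    (h : ∀ k, gramEigenvalue M k ≠ 0 → c k = c' k) :
    M * spectralDiagonal M c = M * spectralDiagonal M c' := by
  rw [← sub_eq_zero, ← Matrix.mul_sub, ← spectralDiagonal_sub,
    ← conjTranspose_mul_self_eq_zero, conjTranspose_mul_self_mul_spectralDiagonal,
    ← spectralDiagonal_zero M]
  congr 1
  ext k
  by_cases hk : gramEigenvalue M k = 0
  · simp [hk]
  · simp [h k hk]

theorem singularPower_zero (M : Matrix α β ℂ) : singularPower M 0 = M := by
  simp only [singularPower, Complex.cpow_zero]
  exact (congrArg (M * ·) (spectralDiagonal_one M)).trans (Matrix.mul_one M)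

theorem singularPower_eq_sum (M : Matrix α β ℂ) (z : ℂ) :
    singularPower M z =
      ∑ k, (positiveSingularValue M k : ℂ) ^ z • singularComponent M k := by
  rw [singularPower, spectralDiagonal_eq_sum, Matrix.mul_sum]
  simp only [Matrix.mul_smul, singularComponent]

theorem singularPower_conjTranspose_mul_self_le_one (M : Matrix α β ℂ) {z : ℂ} (hz : z.re = -1) :
    (singularPower M z)ᴴ * singularPower M z ≤ 1 := by
  rw [singularPower, conjTranspose_mul_self_mul_spectralDiagonal, ← spectralDiagonal_one M]
  refine spectralDiagonal_mono M fun k => ?_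
  rw [star_cpow_mul_cpow_of_pos (positiveSingularValue_pos M k), hz, Real.rpow_neg_one, inv_pow]
  by_cases hk : gramEigenvalue M k = 0
  · simp [hk]
  · rw [sq_positiveSingularValue M hk, ← Complex.ofReal_mul, inv_mul_cancel₀ hk]
    simp

theorem singularPower_conjTranspose_mul_self_eq (M : Matrix α β ℂ) {z : ℂ} (hz : z.re = 1) :
    (singularPower M z)ᴴ * singularPower M z = (Mᴴ * M) * (Mᴴ * M) := by
  rw [singularPower, conjTranspose_mul_self_mul_spectralDiagonal,
    conjTranspose_mul_self_eq_spectralDiagonal, spectralDiagonal_mul]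
  congr 1
  ext k
  rw [star_cpow_mul_cpow_of_pos (positiveSingularValue_pos M k), hz, Real.rpow_one]
  by_cases hk : gramEigenvalue M k = 0
  · simp [hk]
  · rw [sq_positiveSingularValue M hk, Pi.mul_apply]

theorem singularPower_mul_conjTranspose_self_eq (M : Matrix α β ℂ) {z : ℂ} (hz : z.re = 1) :
    singularPower M z * (singularPower M z)ᴴ = (M * Mᴴ) * (M * Mᴴ) := by
  have hassoc : (M * Mᴴ) * (M * Mᴴ) = M * (Mᴴ * M) * Mᴴ := by simp only [Matrix.mul_assoc]
  rw [hassoc, conjTranspose_mul_self_eq_spectralDiagonal, singularPower, conjTranspose_mul,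
    conjTranspose_spectralDiagonal, Matrix.mul_assoc, ← Matrix.mul_assoc (spectralDiagonal M _),
    spectralDiagonal_mul, ← Matrix.mul_assoc]
  congr 1
  refine mul_spectralDiagonal_congr M fun k hk => ?_
  rw [Pi.mul_apply, mul_comm, Pi.star_apply,
    star_cpow_mul_cpow_of_pos (positiveSingularValue_pos M k), hz, Real.rpow_one,
    sq_positiveSingularValue M hk]

variable [Fintype α'] [Fintype β'] [DecidableEq β']

theorem bilinear_singularPower_eq_sum (Φ : Matrix α β ℂ →ₗ[ℂ] Matrix α' β' ℂ →ₗ[ℂ] ℂ)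
    (M : Matrix α β ℂ) (M' : Matrix α' β' ℂ) (z : ℂ) :
    Φ (singularPower M z) (singularPower M' z) =
      ∑ k : β × β', Φ (singularComponent M k.1) (singularComponent M' k.2) *
        ((positiveSingularValue M k.1 * positiveSingularValue M' k.2 : ℝ) : ℂ) ^ z := by
  rw [singularPower_eq_sum M, map_sum, LinearMap.sum_apply, Fintype.sum_prod_type]
  refine Finset.sum_congr rfl fun k _ => ?_
  rw [singularPower_eq_sum M', map_sum]
  refine Finset.sum_congr rfl fun l _ => ?_
  rw [map_smul, map_smul, LinearMap.smul_apply, smul_eq_mul, smul_eq_mul]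
  rw [Complex.ofReal_mul, Complex.mul_cpow_ofReal_nonneg (positiveSingularValue_pos M k).le
    (positiveSingularValue_pos M' l).le]
  ring

theorem norm_bilinear_le_sqrt (Φ : Matrix α β ℂ →ₗ[ℂ] Matrix α' β' ℂ →ₗ[ℂ] ℂ)
    (M : Matrix α β ℂ) (M' : Matrix α' β' ℂ) {J K : ℝ}
    (hJ : ∀ S S', Sᴴ * S ≤ 1 → S'ᴴ * S' ≤ 1 → ‖Φ S S'‖ ≤ J)
    (hK : ∀ S S',
      Sᴴ * S = (Mᴴ * M) * (Mᴴ * M) → S * Sᴴ = (M * Mᴴ) * (M * Mᴴ) →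
      S'ᴴ * S' = (M'ᴴ * M') * (M'ᴴ * M') → S' * S'ᴴ = (M' * M'ᴴ) * (M' * M'ᴴ) →
      ‖Φ S S'‖ ≤ K) :
    ‖Φ M M'‖ ≤ √(J * K) := by
  have hΦ := bilinear_singularPower_eq_sum Φ M M'
  have hΦ0 := hΦ 0
  simp only [singularPower_zero, Complex.cpow_zero, mul_one] at hΦ0
  rw [hΦ0]
  refine norm_sum_le_sqrt_of_norm_sum_cpow_le _
    (fun k => mul_pos (positiveSingularValue_pos M k.1) (positiveSingularValue_pos M' k.2))
    (fun z hz => ?_) (fun z hz => ?_)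
  · rw [← hΦ]
    exact hJ _ _ (singularPower_conjTranspose_mul_self_le_one M hz)
      (singularPower_conjTranspose_mul_self_le_one M' hz)
  · rw [← hΦ]
    exact hK _ _ (singularPower_conjTranspose_mul_self_eq M hz)
      (singularPower_mul_conjTranspose_self_eq M hz) (singularPower_conjTranspose_mul_self_eq M' hz)
      (singularPower_mul_conjTranspose_self_eq M' hz)

end SingularPowers

/-! ### Qubit ladder operators -/

section Qubits

variable {ι : Type*}

section Weight

variable [Fintype ι]

/-- The weight of a bit string under the product of the weights `p i` on the bits. -/
def bitWeight (p : ι → Bool → ℝ) (f : ι → Bool) : ℝ := ∏ i, p i (f i)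

theorem bitWeight_nonneg {p : ι → Bool → ℝ} (hp0 : ∀ i b, 0 ≤ p i b) (f : ι → Bool) :
    0 ≤ bitWeight p f :=
  Finset.prod_nonneg fun i _ => hp0 i (f i)

end Weight

variable [DecidableEq ι]

/-- The bit string `f` with its `i`-th bit flipped. -/
def flipBit (i : ι) (f : ι → Bool) : ι → Bool := Function.update f i (!f i)

theorem flipBit_self (i : ι) (f : ι → Bool) : flipBit i f i = !f i :=
  Function.update_self ..

theorem flipBit_of_ne {i j : ι} (h : j ≠ i) (f : ι → Bool) : flipBit i f j = f j :=
  Function.update_of_ne h ..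

theorem flipBit_flipBit (i : ι) (f : ι → Bool) : flipBit i (flipBit i f) = f := by
  simp [flipBit]

theorem eq_flipBit_iff {i : ι} {f g : ι → Bool} : g = flipBit i f ↔ f = flipBit i g :=
  ⟨fun h => h ▸ (flipBit_flipBit i f).symm, fun h => h ▸ (flipBit_flipBit i g).symm⟩

theorem flipBit_left_inj {i j : ι} {f : ι → Bool} : flipBit i f = flipBit j f ↔ i = j := by
  refine ⟨fun h => ?_, fun h => h ▸ rfl⟩
  by_contra hij
  have hi := congrFun h i
  rw [flipBit_self, flipBit_of_ne hij] at hi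
  exact Bool.not_ne_self _ hi

theorem flipBit_closed_walk_iff {β : Bool} {i j k l : ι} {f h : ι → Bool}
    (hh : h = flipBit k (flipBit l f)) :
    ((f l = β ∧ h k = β) ∧ h j = β ∧ f i = β ∧ f = flipBit i (flipBit j h)) ↔
      (i = j ∧ k = l ∧ f i = β ∧ f k = β) ∨ (i = l ∧ j = k ∧ f i = β ∧ f j = !β) := by
  have hne : β ≠ !β := (Bool.not_ne_self β).symm
  constructor
  · rintro ⟨⟨-, hhk⟩, -, hfi, hf⟩
    rw [eq_flipBit_iff] at hf
    rcases eq_or_ne k l with rfl | hkl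
    · rw [flipBit_flipBit] at hh
      subst hh
      exact Or.inl ⟨(flipBit_left_inj.1 hf).symm, rfl, hfi, hhk⟩
    · have hfk : f k = !β := by
        rw [← hhk, hh, flipBit_self, flipBit_of_ne hkl, Bool.not_not]
      have hki : k ≠ i := fun hki => hne (by rw [← hfk, hki, hfi])
      have hjk : j = k := by
        by_contra hjk
        have hk := congrFun hf k
        rw [flipBit_of_ne (Ne.symm hjk), flipBit_of_ne hki, hhk, hfk] at hk
        exact hne hk
      rw [hh, hjk, flipBit_flipBit] at hf
      exact Or.inr ⟨(flipBit_left_inj.1 hf).symm, hjk, hfi, hjk ▸ hfk⟩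
  · rintro (⟨rfl, rfl, hfi, hfk⟩ | ⟨rfl, rfl, hfi, hfj⟩)
    · rw [flipBit_flipBit] at hh
      subst hh
      exact ⟨⟨hfk, hfk⟩, hfi, hfi, (flipBit_flipBit i h).symm⟩
    · have hji : j ≠ i := by
        rintro rfl
        exact hne (hfi.symm.trans hfj)
      have hhj : h j = β := by
        rw [hh, flipBit_self, flipBit_of_ne hji, hfj, Bool.not_not]
      exact ⟨⟨hfi, hhj⟩, hhj, hfi, by rw [hh, flipBit_flipBit, flipBit_flipBit]⟩

variable [Fintype ι]

/-- The ladder operator of the `i`-th qubit: it sends the basis vector of a bit string `f` with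
`f i = β` to that of `flipBit i f`, and the other basis vectors to `0`. -/
def ladder (β : Bool) (i : ι) : Matrix (ι → Bool) (ι → Bool) ℂ :=
  Matrix.of fun g f => if f i = β ∧ g = flipBit i f then 1 else 0

theorem conjTranspose_ladder (β : Bool) (i : ι) : (ladder β i)ᴴ = ladder (!β) i := by
  ext g f
  have hiff : (g i = β ∧ f = flipBit i g) ↔ (f i = !β ∧ g = flipBit i f) := by
    rw [eq_flipBit_iff (f := g)]
    refine and_congr_left fun h => ?_
    rw [h, flipBit_self]
    cases β <;> simp
  simp only [conjTranspose_apply, ladder, of_apply, hiff, apply_ite star, star_one, star_zero]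

theorem conjTranspose_ladder_mul_ladder_apply (β : Bool) (k l : ι) (h f : ι → Bool) :
    ((ladder β k)ᴴ * ladder β l) h f =
      if f l = β ∧ h k = β ∧ h = flipBit k (flipBit l f) then 1 else 0 := by
  rw [mul_apply, Finset.sum_eq_single (flipBit l f)]
  · simp only [conjTranspose_apply, ladder, of_apply, eq_flipBit_iff (f := h)]
    by_cases hl : f l = β <;> simp [hl]
  · intro g _ hg
    simp [ladder, hg]
  · simp

theorem ladder_fourfold_apply_self (β : Bool) (i j k l : ι) (f : ι → Bool) :
    (((ladder β i)ᴴ * ladder β j) * ((ladder β k)ᴴ * ladder β l)) f f =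
      (if i = j ∧ k = l ∧ f i = β ∧ f k = β then 1 else 0) +
        if i = l ∧ j = k ∧ f i = β ∧ f j = !β then 1 else 0 := by
  have hexcl : (i = j ∧ k = l ∧ f i = β ∧ f k = β) →
      ¬(i = l ∧ j = k ∧ f i = β ∧ f j = !β) := by
    rintro ⟨rfl, -, hfi, -⟩ ⟨-, -, -, hfj⟩
    exact Bool.not_ne_self β (hfj.symm.trans hfi)
  rw [mul_apply, Finset.sum_eq_single (flipBit k (flipBit l f))]
  · simp only [conjTranspose_ladder_mul_ladder_apply, and_true, ← ite_and, mul_ite, mul_one,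
      mul_zero]
    rw [if_congr (flipBit_closed_walk_iff rfl) rfl rfl]
    by_cases hpair : i = j ∧ k = l ∧ f i = β ∧ f k = β
    · rw [if_pos (Or.inl hpair), if_pos hpair, if_neg (hexcl hpair), add_zero]
    · simp only [hpair, false_or, if_false, zero_add]
  · intro g _ hg
    simp [conjTranspose_ladder_mul_ladder_apply, hg]
  · simp

theorem sum_bitWeight_eq_prod (p : ι → Bool → ℝ) : ∑ f, bitWeight p f = ∏ i, ∑ b, p i b := by
  rw [Finset.prod_univ_sum, Fintype.piFinset_univ]
  rfl

theorem sum_bitWeight {p : ι → Bool → ℝ} (hp : ∀ i, ∑ b, p i b = 1) : ∑ f, bitWeight p f = 1 := by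
  rw [sum_bitWeight_eq_prod, Finset.prod_eq_one fun i _ => hp i]

theorem sum_bitWeight_mul_prod {p : ι → Bool → ℝ} (hp : ∀ i, ∑ b, p i b = 1) (s : Finset ι)
    (c : ι → Bool → ℝ) :
    ∑ f, bitWeight p f * ∏ i ∈ s, c i (f i) = ∏ i ∈ s, ∑ b, p i b * c i b := by
  have hprod (f : ι → Bool) : bitWeight p f * ∏ i ∈ s, c i (f i) =
      bitWeight (fun i b => p i b * if i ∈ s then c i b else 1) f := by
    rw [bitWeight, bitWeight, Finset.prod_mul_distrib, Finset.prod_ite_mem, Finset.univ_inter]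
  have hsum (i : ι) : ∑ b, p i b * (if i ∈ s then c i b else 1) =
      if i ∈ s then ∑ b, p i b * c i b else 1 := by
    split_ifs
    · rfl
    · simpa only [mul_one] using hp i
  simp only [hprod, sum_bitWeight_eq_prod, hsum, Finset.prod_ite_mem, Finset.univ_inter]

theorem sum_bitWeight_bit_eq {p : ι → Bool → ℝ} (hp : ∀ i, ∑ b, p i b = 1) (i : ι) (β : Bool) :
    ∑ f, bitWeight p f * (if f i = β then 1 else 0) = p i β := by
  simpa using sum_bitWeight_mul_prod hp {i} fun _ b => if b = β then 1 else 0

theorem sum_bitWeight_bits_eq {p : ι → Bool → ℝ} (hp : ∀ i, ∑ b, p i b = 1) {i j : ι}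
    (hij : i ≠ j) (β γ : Bool) :
    ∑ f, bitWeight p f * (if f i = β ∧ f j = γ then 1 else 0) = p i β * p j γ := by
  have h := sum_bitWeight_mul_prod hp {i, j} fun m b =>
    if b = (if m = i then β else γ) then 1 else 0
  simpa [Finset.prod_pair hij, hij.symm, ← ite_and, and_comm] using h

theorem sum_bitWeight_mul_fourfold {p : ι → Bool → ℝ} (hp : ∀ i, ∑ b, p i b = 1) (β : Bool)
    (i j k l : ι) :
    ∑ f, (bitWeight p f : ℂ) * (((ladder β i)ᴴ * ladder β j) * ((ladder β k)ᴴ * ladder β l)) f f =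
      (if i = j ∧ k = l then (p i β * p k β : ℂ) else 0) +
        if i = l ∧ j = k then (p i β * p j (!β) : ℂ) else 0 := by
  have hbits {m q : ι} (hmq : m ≠ q) (c : Bool) :
      ∑ f, (bitWeight p f : ℂ) * (if f m = β ∧ f q = c then 1 else 0) = p m β * p q c := by
    simpa only [Complex.ofReal_sum, Complex.ofReal_mul, apply_ite Complex.ofReal,
      Complex.ofReal_one, Complex.ofReal_zero]
      using congrArg Complex.ofReal (sum_bitWeight_bits_eq hp hmq β c)
  simp only [ladder_fourfold_apply_self, mul_add, Finset.sum_add_distrib]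
  by_cases hpaired : i = j ∧ k = l
  · obtain ⟨rfl, rfl⟩ := hpaired
    rcases eq_or_ne i k with rfl | hik
    · have hbit : ∑ f, (bitWeight p f : ℂ) * (if f i = β then 1 else 0) = p i β := by
        simpa only [Complex.ofReal_sum, Complex.ofReal_mul, apply_ite Complex.ofReal,
          Complex.ofReal_one, Complex.ofReal_zero]
          using congrArg Complex.ofReal (sum_bitWeight_bit_eq hp i β)
      have htotal : (p i β : ℂ) + p i (!β) = 1 := by
        have h := hp i
        rw [Fintype.sum_bool] at h
        cases β
        · exact_mod_cast (add_comm _ _).trans h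
        · exact_mod_cast h
      have hexcl (f : ι → Bool) : ¬(f i = β ∧ f i = !β) := fun h =>
        Bool.not_ne_self β (h.2.symm.trans h.1)
      simp only [true_and, and_self, if_true, hexcl, if_false, mul_zero, Finset.sum_const_zero,
        hbit]
      linear_combination (-(p i β : ℂ)) * htotal
    · simp only [true_and, hik, false_and, if_true, if_false, mul_zero, Finset.sum_const_zero,
        hbits hik]
  · by_cases hcrossed : i = l ∧ j = k
    · obtain ⟨rfl, rfl⟩ := hcrossed
      have hij : i ≠ j := fun h => hpaired ⟨h, h.symm⟩
      simp only [true_and, hij, false_and, if_true, if_false, mul_zero, Finset.sum_const_zero,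
        hbits hij]
    · have h₁ (P : Prop) : ¬(i = j ∧ k = l ∧ P) := fun h => hpaired ⟨h.1, h.2.1⟩
      have h₂ (P : Prop) : ¬(i = l ∧ j = k ∧ P) := fun h => hcrossed ⟨h.1, h.2.1⟩
      simp only [hpaired, hcrossed, h₁, h₂, if_false, mul_zero, Finset.sum_const_zero]

theorem bitWeight_update (p : ι → Bool → ℝ) (i : ι) (q : Bool → ℝ) (f : ι → Bool) :
    bitWeight (Function.update p i q) f = q (f i) * ∏ j ∈ Finset.univ.erase i, p j (f j) := by
  rw [bitWeight, ← Finset.mul_prod_erase _ _ (Finset.mem_univ i), Function.update_self]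
  congr 1
  exact Finset.prod_congr rfl fun j hj => by rw [Function.update_of_ne (Finset.ne_of_mem_erase hj)]

theorem sqrt_bitWeight_flipBit_mul {p : ι → Bool → ℝ} (hp0 : ∀ i b, 0 ≤ p i b) (i : ι)
    (f : ι → Bool) :
    √(bitWeight p (flipBit i f)) * √(bitWeight p f) =
      √(p i true * p i false) * ∏ j ∈ Finset.univ.erase i, p j (f j) := by
  have herase : ∏ j ∈ Finset.univ.erase i, p j (flipBit i f j) =
      ∏ j ∈ Finset.univ.erase i, p j (f j) :=
    Finset.prod_congr rfl fun j hj => by rw [flipBit_of_ne (Finset.ne_of_mem_erase hj)]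
  have hbits : p i (!f i) * p i (f i) = p i true * p i false := by
    cases f i
    · rfl
    · exact mul_comm _ _
  rw [← Real.sqrt_mul (bitWeight_nonneg hp0 _), bitWeight, bitWeight,
    ← Finset.mul_prod_erase _ _ (Finset.mem_univ i),
    ← Finset.mul_prod_erase _ (fun j => p j (f j)) (Finset.mem_univ i), herase, flipBit_self,
    mul_mul_mul_comm, hbits, Real.sqrt_mul (mul_nonneg (hp0 _ _) (hp0 _ _)),
    Real.sqrt_mul_self (Finset.prod_nonneg fun j _ => hp0 j _)]

theorem sum_sqrt_bitWeight_mul_ladder {p : ι → Bool → ℝ} (hp : ∀ i, ∑ b, p i b = 1)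
    (hp0 : ∀ i b, 0 ≤ p i b) (i j : ι) :
    ∑ f, ∑ g, (√(bitWeight p f) : ℂ) * √(bitWeight p g) * ladder true i f g * ladder true j f g =
      if i = j then (√(p i true * p i false) : ℂ) else 0 := by
  rcases eq_or_ne i j with rfl | hij
  · set q : Bool → ℝ := fun b => if b then √(p i true * p i false) else 0 with hq
    have hcolumn (g : ι → Bool) :
        ∑ f, (√(bitWeight p f) : ℂ) * √(bitWeight p g) * ladder true i f g * ladder true i f g =
          (bitWeight (Function.update p i q) g : ℂ) := by
      rw [Finset.sum_eq_single (flipBit i g)]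
      · rw [← Complex.ofReal_mul, sqrt_bitWeight_flipBit_mul hp0, bitWeight_update]
        by_cases hg : g i = true <;> simp [ladder, hq, hg]
      · intro f _ hf
        simp [ladder, hf]
      · simp
    rw [Finset.sum_comm, if_pos rfl]
    simp only [hcolumn]
    rw [← Complex.ofReal_sum, sum_bitWeight_eq_prod, Fintype.prod_eq_single i]
    · simp [hq]
    · intro m hm
      simpa only [Function.update_of_ne hm] using hp m
  · have hdisjoint (f g : ι → Bool) : ladder true i f g * ladder true j f g = 0 := by
      simp only [ladder, of_apply, ite_mul, one_mul, zero_mul]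
      rw [← ite_and, if_neg]
      rintro ⟨⟨-, hfi⟩, -, hfj⟩
      exact hij (flipBit_left_inj.1 (hfi.symm.trans hfj))
    simp only [mul_assoc, hdisjoint, mul_zero, Finset.sum_const_zero, if_neg hij]

end Qubits

section Moments

/-- The slice map `id ⊗ tr(D ·)` for the diagonal matrix `D` with entries `W`. -/
def weightedPartialTrace {X Q : Type*} [Fintype Q] (W : Q → ℝ) :
    Matrix (X × Q) (X × Q) ℂ →ₗ[ℂ] Matrix X X ℂ where
  toFun M := Matrix.of fun x x' => ∑ f, (W f : ℂ) * M (x, f) (x', f)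
  map_add' M N := by
    ext x x'
    simp only [of_apply, Matrix.add_apply, mul_add, Finset.sum_add_distrib]
  map_smul' c M := by
    ext x x'
    simp only [of_apply, Matrix.smul_apply, smul_eq_mul, Finset.mul_sum, RingHom.id_apply,
      mul_left_comm]

theorem weightedPartialTrace_apply {X Q : Type*} [Fintype Q] (W : Q → ℝ)
    (M : Matrix (X × Q) (X × Q) ℂ) (x x' : X) :
    weightedPartialTrace W M x x' = ∑ f, (W f : ℂ) * M (x, f) (x', f) :=
  rfl

theorem weightedPartialTrace_kronecker {X Q : Type*} [Fintype Q] (W : Q → ℝ) (M : Matrix X X ℂ)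
    (N : Matrix Q Q ℂ) :
    weightedPartialTrace W (M ⊗ₖ N) = (∑ f, (W f : ℂ) * N f f) • M := by
  ext x x'
  simp only [weightedPartialTrace_apply, kroneckerMap_apply, Matrix.smul_apply, smul_eq_mul,
    Finset.sum_mul, mul_assoc, mul_comm (M x x')]

variable {A X : Type*} {ι : Type*} [Fintype ι] [DecidableEq ι]

/-- The operator `∑ i, v i ⊗ a i`, where `a i = ladder β i`; randomising the coefficients `v` with
the ladder operators is what the rounding argument uses instead of scalar random variables. -/
def ladderSum (β : Bool) (v : ι → Matrix A X ℂ) :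
    Matrix (A × (ι → Bool)) (X × (ι → Bool)) ℂ :=
  ∑ i, v i ⊗ₖ ladder β i

theorem conjTranspose_ladderSum (β : Bool) (v : ι → Matrix A X ℂ) :
    (ladderSum β v)ᴴ = ladderSum (!β) fun i => (v i)ᴴ := by
  simp only [ladderSum, conjTranspose_sum, conjTranspose_kronecker, conjTranspose_ladder]

variable [Fintype A]

theorem conjTranspose_mul_mul_le_of_le_one [Finite X] [DecidableEq A] {K : Matrix A A ℂ}
    (hK : K ≤ 1) (v : Matrix A X ℂ) : vᴴ * K * v ≤ vᴴ * v := by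
  rw [Matrix.le_iff] at hK ⊢
  simpa only [Matrix.mul_sub, Matrix.sub_mul, Matrix.mul_one] using
    hK.conjTranspose_mul_mul_same v

theorem mul_self_le_one_of_le_one [DecidableEq A] {K : Matrix A A ℂ} (hK₀ : 0 ≤ K)
    (hK₁ : K ≤ 1) : K * K ≤ 1 := by
  have hK : K.PosSemidef := nonneg_iff_posSemidef.1 hK₀
  have hsplit : K - K * K = Kᴴ * (1 - K) * K + (1 - K)ᴴ * K * (1 - K) := by
    rw [conjTranspose_sub, conjTranspose_one, hK.isHermitian.eq]
    noncomm_ring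
  have hsq : K * K ≤ K := by
    rw [Matrix.le_iff, hsplit]
    exact ((Matrix.le_iff.1 hK₁).conjTranspose_mul_mul_same K).add
      (hK.conjTranspose_mul_mul_same (1 - K))
  exact hsq.trans hK₁

theorem gram_ladderSum_mul_gram_ladderSum [Fintype X] (β : Bool) (v : ι → Matrix A X ℂ) :
    ((ladderSum β v)ᴴ * ladderSum β v) * ((ladderSum β v)ᴴ * ladderSum β v) =
      ∑ i, ∑ j, ∑ k, ∑ l, (((v i)ᴴ * v j) * ((v k)ᴴ * v l)) ⊗ₖ
        (((ladder β i)ᴴ * ladder β j) * ((ladder β k)ᴴ * ladder β l)) := by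
  have hgram : (ladderSum β v)ᴴ * ladderSum β v =
      ∑ i, ∑ j, ((v i)ᴴ * v j) ⊗ₖ ((ladder β i)ᴴ * ladder β j) := by
    simp only [ladderSum, conjTranspose_sum, conjTranspose_kronecker, Matrix.sum_mul,
      mul_kronecker_mul]
    simp only [Matrix.mul_sum]
  rw [hgram]
  simp only [Finset.sum_mul]
  simp only [Finset.mul_sum, mul_kronecker_mul]

theorem weightedPartialTrace_gram_ladderSum_sq [Fintype X] {p : ι → Bool → ℝ}
    (hp : ∀ i, ∑ b, p i b = 1) (β : Bool) (v : ι → Matrix A X ℂ) :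
    weightedPartialTrace (bitWeight p)
        (((ladderSum β v)ᴴ * ladderSum β v) * ((ladderSum β v)ᴴ * ladderSum β v)) =
      (∑ i, (p i β : ℂ) • ((v i)ᴴ * v i)) * (∑ i, (p i β : ℂ) • ((v i)ᴴ * v i)) +
        ∑ i, (p i β : ℂ) • ((v i)ᴴ * (∑ j, (p j (!β) : ℂ) • (v j * (v j)ᴴ)) * v i) := by
  simp only [gram_ladderSum_mul_gram_ladderSum, map_sum, weightedPartialTrace_kronecker,
    sum_bitWeight_mul_fourfold hp, add_smul, Finset.sum_add_distrib, ite_and, ite_smul, zero_smul,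
    Finset.sum_ite_irrel, Finset.sum_ite_eq, Finset.sum_const_zero, Finset.mem_univ, if_true]
  congr 1
  · simp only [Finset.sum_mul_sum, smul_mul_smul_comm]
  · simp only [Matrix.mul_sum, Matrix.sum_mul, Finset.smul_sum, Matrix.mul_smul, Matrix.smul_mul,
      smul_smul, Matrix.mul_assoc]

theorem weightedPartialTrace_gram_ladderSum_sq_le [Fintype X] [DecidableEq A] [DecidableEq X]
    {p : ι → Bool → ℝ} (hp : ∀ i, ∑ b, p i b = 1) (hp0 : ∀ i b, 0 ≤ p i b) (β : Bool)
    (v : ι → Matrix A X ℂ) (hrow : ∑ i, (p i β : ℂ) • ((v i)ᴴ * v i) ≤ 1)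
    (hcol : ∑ i, (p i (!β) : ℂ) • (v i * (v i)ᴴ) ≤ 1) :
    weightedPartialTrace (bitWeight p)
        (((ladderSum β v)ᴴ * ladderSum β v) * ((ladderSum β v)ᴴ * ladderSum β v)) ≤
      (2 : ℂ) • 1 := by
  have hp0' (i : ι) : (0 : ℂ) ≤ p i β := by exact_mod_cast hp0 i β
  have hrow₀ : 0 ≤ ∑ i, (p i β : ℂ) • ((v i)ᴴ * v i) :=
    Finset.sum_nonneg fun i _ => nonneg_iff_posSemidef.2
      ((posSemidef_conjTranspose_mul_self (v i)).smul (hp0' i))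
  rw [weightedPartialTrace_gram_ladderSum_sq hp, two_smul]
  refine add_le_add (mul_self_le_one_of_le_one hrow₀ hrow) (le_trans ?_ hrow)
  refine Finset.sum_le_sum fun i _ => ?_
  rw [Matrix.le_iff, ← smul_sub]
  exact (Matrix.le_iff.1 (conjTranspose_mul_mul_le_of_le_one hcol (v i))).smul (hp0' i)

theorem weightedPartialTrace_cogram_ladderSum_sq_le [Fintype X] [DecidableEq A] [DecidableEq X]
    {p : ι → Bool → ℝ} (hp : ∀ i, ∑ b, p i b = 1) (hp0 : ∀ i b, 0 ≤ p i b) (β : Bool)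
    (v : ι → Matrix A X ℂ) (hrow : ∑ i, (p i β : ℂ) • ((v i)ᴴ * v i) ≤ 1)
    (hcol : ∑ i, (p i (!β) : ℂ) • (v i * (v i)ᴴ) ≤ 1) :
    weightedPartialTrace (bitWeight p)
        ((ladderSum β v * (ladderSum β v)ᴴ) * (ladderSum β v * (ladderSum β v)ᴴ)) ≤
      (2 : ℂ) • 1 := by
  have h := weightedPartialTrace_gram_ladderSum_sq_le hp hp0 (!β) (fun i => (v i)ᴴ)
    (by simpa only [conjTranspose_conjTranspose] using hcol)
    (by simpa only [conjTranspose_conjTranspose, Bool.not_not] using hrow)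
  rwa [← conjTranspose_ladderSum, conjTranspose_conjTranspose] at h

end Moments

/-! ### The semidefinite relaxation -/

section PartialTrace

variable {X A : Type*}

/-- The partial trace over the first tensor factor. -/
def partialTraceFst [Fintype X] : Matrix (X × A) (X × A) ℂ →ₗ[ℂ] Matrix A A ℂ where
  toFun M := Matrix.of fun a a' => ∑ x, M (x, a) (x, a')
  map_add' M N := by
    ext a a'
    simp only [of_apply, Matrix.add_apply, Finset.sum_add_distrib]
  map_smul' c M := by
    ext a a'
    simp only [of_apply, Matrix.smul_apply, Finset.smul_sum, RingHom.id_apply]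

/-- The partial trace over the second tensor factor. -/
def partialTraceSnd [Fintype A] : Matrix (X × A) (X × A) ℂ →ₗ[ℂ] Matrix X X ℂ where
  toFun M := Matrix.of fun x x' => ∑ a, M (x, a) (x', a)
  map_add' M N := by
    ext x x'
    simp only [of_apply, Matrix.add_apply, Finset.sum_add_distrib]
  map_smul' c M := by
    ext x x'
    simp only [of_apply, Matrix.smul_apply, Finset.smul_sum, RingHom.id_apply]

theorem partialTraceFst_apply [Fintype X] (M : Matrix (X × A) (X × A) ℂ) (a a' : A) :
    partialTraceFst M a a' = ∑ x, M (x, a) (x, a') :=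
  rfl

theorem partialTraceSnd_apply [Fintype A] (M : Matrix (X × A) (X × A) ℂ) (x x' : X) :
    partialTraceSnd M x x' = ∑ a, M (x, a) (x', a) :=
  rfl

theorem partialTraceFst_transpose [Fintype X] (M : Matrix (X × A) (X × A) ℂ) :
    partialTraceFst Mᵀ = (partialTraceFst M)ᵀ :=
  rfl

theorem partialTraceSnd_transpose [Fintype A] (M : Matrix (X × A) (X × A) ℂ) :
    partialTraceSnd Mᵀ = (partialTraceSnd M)ᵀ :=
  rfl

theorem partialTraceFst_one [Fintype X] [DecidableEq X] [DecidableEq A] :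
    partialTraceFst (1 : Matrix (X × A) (X × A) ℂ) = (Fintype.card X : ℂ) • 1 := by
  ext a a'
  simp [partialTraceFst_apply, Matrix.one_apply]

theorem partialTraceSnd_one [Fintype A] [DecidableEq X] [DecidableEq A] :
    partialTraceSnd (1 : Matrix (X × A) (X × A) ℂ) = (Fintype.card A : ℂ) • 1 := by
  ext x x'
  simp [partialTraceSnd_apply, Matrix.one_apply]

theorem partialTraceFst_mono [Fintype X] {M N : Matrix (X × A) (X × A) ℂ} (h : M ≤ N) :
    partialTraceFst M ≤ partialTraceFst N := by
  have hsum : partialTraceFst N - partialTraceFst M =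
      ∑ x, (N - M).submatrix (Prod.mk x) (Prod.mk x) := by
    rw [← map_sub]
    ext a a'
    simp only [partialTraceFst_apply, Matrix.sum_apply, submatrix_apply]
  rw [Matrix.le_iff, hsum]
  exact posSemidef_sum _ fun x _ => (Matrix.le_iff.1 h).submatrix _

theorem partialTraceSnd_mono [Fintype A] {M N : Matrix (X × A) (X × A) ℂ} (h : M ≤ N) :
    partialTraceSnd M ≤ partialTraceSnd N := by
  have hsum : partialTraceSnd N - partialTraceSnd M =
      ∑ a, (N - M).submatrix (fun x => (x, a)) (fun x => (x, a)) := by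
    rw [← map_sub]
    ext x x'
    simp only [partialTraceSnd_apply, Matrix.sum_apply, submatrix_apply]
  rw [Matrix.le_iff, hsum]
  exact posSemidef_sum _ fun a _ => (Matrix.le_iff.1 h).submatrix _

end PartialTrace

theorem norm_apply_le_one_of_posSemidef {I : Type*} {M : Matrix I I ℂ} (hM : M.PosSemidef)
    (hdiag : ∀ i, M i i ≤ 1) (i j : I) : ‖M i j‖ ≤ 1 := by
  have hdet : 0 ≤ M i i * M j j - M i j * star (M i j) := by
    have hminor := (hM.submatrix ![i, j]).det_nonneg
    rw [det_fin_two] at hminor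
    simpa only [submatrix_apply, cons_val_zero, cons_val_one, hM.isHermitian.apply j i] using hminor
  have hsq : ((‖M i j‖ ^ 2 : ℝ) : ℂ) ≤ (1 : ℝ) := by
    calc ((‖M i j‖ ^ 2 : ℝ) : ℂ) = M i j * star (M i j) := by
          rw [Complex.star_def, Complex.mul_conj', Complex.ofReal_pow]
      _ ≤ M i i * M j j := sub_nonneg.1 hdet
      _ ≤ 1 * 1 := mul_le_mul (hdiag i) (hdiag j) hM.diag_nonneg zero_le_one
      _ = (1 : ℝ) := by norm_num
  exact (sq_le_one_iff₀ (norm_nonneg _)).1 (by exact_mod_cast hsq)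

theorem diag_le_one_of_le_one {I : Type*} [DecidableEq I] {M : Matrix I I ℂ} (hM : M ≤ 1) (i : I) :
    M i i ≤ 1 := by
  simpa using (Matrix.le_iff.1 hM).diag_nonneg (i := i)

theorem smul_add_smul_one_le_one {I : Type*} [DecidableEq I] {M : Matrix I I ℂ} (hM : M ≤ 1)
    {s t : ℝ} (ht : 0 ≤ t) (hst : s + t ≤ 1) : (t : ℂ) • M + (s : ℂ) • 1 ≤ 1 := by
  have hslack : 1 - ((t : ℂ) • M + (s : ℂ) • 1) =
      (t : ℂ) • (1 - M) + ((1 - (s + t) : ℝ) : ℂ) • 1 := by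
    push_cast
    module
  rw [Matrix.le_iff, hslack]
  exact ((Matrix.le_iff.1 hM).smul (Complex.zero_le_real.2 ht)).add
    (PosSemidef.one.smul (Complex.zero_le_real.2 (sub_nonneg.2 hst)))

theorem smul_le_one_of_le_one {I : Type*} [DecidableEq I] {M : Matrix I I ℂ} (hM : M ≤ 1)
    {t : ℝ} (ht₀ : 0 ≤ t) (ht₁ : t ≤ 1) : (t : ℂ) • M ≤ 1 := by
  simpa using smul_add_smul_one_le_one hM ht₀ (s := 0) (by linarith)

theorem posSemidef_fromBlocks_smul {I J : Type*} {P : Matrix I I ℂ} {C : Matrix I J ℂ}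
    {Q : Matrix J J ℂ} (h : (fromBlocks P C Cᴴ Q).PosSemidef) {t : ℝ} (ht : 0 ≤ t) :
    (fromBlocks ((t : ℂ) • P) ((t : ℂ) • C) ((t : ℂ) • C)ᴴ ((t : ℂ) • Q)).PosSemidef := by
  rw [conjTranspose_smul, Complex.star_def, Complex.conj_ofReal, ← fromBlocks_smul]
  exact h.smul (Complex.zero_le_real.2 ht)

theorem posSemidef_fromBlocks_add_smul_one {I J : Type*} [DecidableEq I] {P : Matrix I I ℂ}
    {C : Matrix I J ℂ} {Q : Matrix J J ℂ} (h : (fromBlocks P C Cᴴ Q).PosSemidef) {c : ℝ}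
    (hc : 0 ≤ c) : (fromBlocks (P + (c : ℂ) • 1) C Cᴴ Q).PosSemidef := by
  classical
  have hcorner : (fromBlocks ((c : ℂ) • 1) 0 0 0 : Matrix (I ⊕ J) (I ⊕ J) ℂ).PosSemidef := by
    rw [smul_one_eq_diagonal, ← diagonal_zero, fromBlocks_diagonal, posSemidef_diagonal_iff]
    exact Sum.rec (fun _ => Complex.zero_le_real.2 hc) fun _ => le_rfl
  simpa only [fromBlocks_add, add_zero] using h.add hcorner

section Relaxation

variable {X Y A B : Type*} [Fintype X] [Fintype Y] [Fintype A] [Fintype B]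
  [DecidableEq X] [DecidableEq Y] [DecidableEq A] [DecidableEq B]

/-- Positivity certificates for the semidefinite relaxation of the set of amplitudes
`⟪ξ, E i F j ξ⟫`. The subscripts of `P₁, P₂` and `Q₁, Q₂` record which partial trace, the first or
the second, is required to be at most `1`. -/
structure IsCertificate (C : Matrix (X × A) (Y × B) ℂ) (P₁ P₂ : Matrix (X × A) (X × A) ℂ)
    (Q₁ Q₂ : Matrix (Y × B) (Y × B) ℂ) : Prop where
  posSemidef₁₂ : (fromBlocks P₁ C Cᴴ Q₂).PosSemidef
  posSemidef₂₁ : (fromBlocks P₂ C Cᴴ Q₁).PosSemidef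
  left_fst_le : partialTraceFst P₁ ≤ 1
  left_snd_le : partialTraceSnd P₂ ≤ 1
  right_fst_le : partialTraceFst Q₁ ≤ 1
  right_snd_le : partialTraceSnd Q₂ ≤ 1

/-- Feasible points of the semidefinite relaxation. -/
def IsFeasible (C : Matrix (X × A) (Y × B) ℂ) : Prop :=
  ∃ P₁ P₂ Q₁ Q₂, IsCertificate C P₁ P₂ Q₁ Q₂

theorem IsFeasible.norm_apply_le_one {C : Matrix (X × A) (Y × B) ℂ} (hC : IsFeasible C)
    (i : X × A) (j : Y × B) : ‖C i j‖ ≤ 1 := by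
  obtain ⟨P₁, P₂, Q₁, Q₂, h⟩ := hC
  have hP : P₁.PosSemidef := h.posSemidef₁₂.submatrix Sum.inl
  have hQ : Q₂.PosSemidef := h.posSemidef₁₂.submatrix Sum.inr
  refine norm_apply_le_one_of_posSemidef h.posSemidef₁₂ ?_ (Sum.inl i) (Sum.inr j)
  rintro (⟨x, a⟩ | ⟨y, b⟩)
  · exact (Finset.single_le_sum (f := fun x => P₁ (x, a) (x, a)) (fun _ _ => hP.diag_nonneg)
      (Finset.mem_univ x)).trans (diag_le_one_of_le_one h.left_fst_le a)
  · exact (Finset.single_le_sum (f := fun b => Q₂ (y, b) (y, b)) (fun _ _ => hQ.diag_nonneg)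
      (Finset.mem_univ b)).trans (diag_le_one_of_le_one h.right_snd_le y)

theorem IsFeasible.exists_posDef_certificate {C : Matrix (X × A) (Y × B) ℂ} (hC : IsFeasible C)
    {t : ℝ} (ht₀ : 0 ≤ t) (ht₁ : t < 1) :
    ∃ P₁ P₂ Q₁ Q₂, P₁.PosDef ∧ P₂.PosDef ∧ IsCertificate ((t : ℂ) • C) P₁ P₂ Q₁ Q₂ := by
  obtain ⟨P₁, P₂, Q₁, Q₂, h⟩ := hC
  obtain ⟨c, hc, hcX, hcA⟩ : ∃ c : ℝ, 0 < c ∧ c * Fintype.card X + t ≤ 1 ∧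
      c * Fintype.card A + t ≤ 1 := by
    have hcard : (0 : ℝ) < Fintype.card X + Fintype.card A + 1 := by positivity
    refine ⟨(1 - t) / (Fintype.card X + Fintype.card A + 1), div_pos (sub_pos.2 ht₁) hcard, ?_, ?_⟩
    all_goals
      rw [← le_sub_iff_add_le, div_mul_eq_mul_div, div_le_iff₀ hcard]
      refine mul_le_mul_of_nonneg_left ?_ (sub_pos.2 ht₁).le
      linarith [Nat.cast_nonneg (α := ℝ) (Fintype.card X),
        Nat.cast_nonneg (α := ℝ) (Fintype.card A)]
  have hposDef {P : Matrix (X × A) (X × A) ℂ} (hP : P.PosSemidef) :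
      ((t : ℂ) • P + (c : ℂ) • 1).PosDef :=
    (PosDef.one.smul (Complex.zero_lt_real.2 hc)).posSemidef_add
      (hP.smul (Complex.zero_le_real.2 ht₀))
  refine ⟨_, _, _, _, hposDef (P := P₁) (h.posSemidef₁₂.submatrix Sum.inl),
    hposDef (P := P₂) (h.posSemidef₂₁.submatrix Sum.inl),
    posSemidef_fromBlocks_add_smul_one (posSemidef_fromBlocks_smul h.posSemidef₁₂ ht₀) hc.le,
    posSemidef_fromBlocks_add_smul_one (posSemidef_fromBlocks_smul h.posSemidef₂₁ ht₀) hc.le,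
    ?_, ?_, ?_, ?_⟩
  · rw [map_add, map_smul, map_smul, partialTraceFst_one, smul_smul]
    exact_mod_cast smul_add_smul_one_le_one h.left_fst_le ht₀ hcX
  · rw [map_add, map_smul, map_smul, partialTraceSnd_one, smul_smul]
    exact_mod_cast smul_add_smul_one_le_one h.left_snd_le ht₀ hcA
  · exact (map_smul _ _ _).trans_le (smul_le_one_of_le_one h.right_fst_le ht₀ ht₁.le)
  · exact (map_smul _ _ _).trans_le (smul_le_one_of_le_one h.right_snd_le ht₀ ht₁.le)

end Relaxation

section SimultaneousDiagonalization

variable {I : Type*} [Fintype I] [DecidableEq I]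

theorem exists_eq_mul_mul_conjTranspose {S : Matrix I I ℂ} (hS : IsUnit S) (P : Matrix I I ℂ) :
    ∃ K, P = S * K * Sᴴ := by
  have hdet : IsUnit S.det := (isUnit_iff_isUnit_det S).1 hS
  refine ⟨S⁻¹ * P * (S⁻¹)ᴴ, ?_⟩
  calc P = S * S⁻¹ * P * (S * S⁻¹)ᴴ := by
        rw [mul_nonsing_inv S hdet, conjTranspose_one, Matrix.one_mul, Matrix.mul_one]
    _ = S * (S⁻¹ * P * (S⁻¹)ᴴ) * Sᴴ := by
        rw [conjTranspose_mul]
        simp only [Matrix.mul_assoc]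

theorem exists_simultaneous_diagonalization {P R : Matrix I I ℂ} (hP : P.PosDef)
    (hR : R.PosDef) :
    ∃ (T : Matrix I I ℂ) (p : I → Bool → ℝ), IsUnit T ∧ (∀ i b, 0 < p i b) ∧
      (∀ i, ∑ b, p i b = 1) ∧ P = T * diagonal (fun i => (p i true : ℂ)) * Tᴴ ∧
      R = T * diagonal (fun i => (p i false : ℂ)) * Tᴴ := by
  obtain ⟨S, hS, hPR⟩ :=
    CStarAlgebra.isStrictlyPositive_iff_eq_mul_star_self.1 (hP.add hR).isStrictlyPositive
  obtain ⟨K, rfl⟩ := exists_eq_mul_mul_conjTranspose hS P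
  have hK : K.PosDef := (IsUnit.posDef_star_right_conjugate_iff hS).1 hP
  set U : Matrix I I ℂ := hK.isHermitian.eigenvectorUnitary.val
  set d := hK.isHermitian.eigenvalues
  have hU : U * Uᴴ = 1 := Unitary.coe_mul_star_self _
  have hspec : K = U * diagonal (fun i => (d i : ℂ)) * Uᴴ := hK.isHermitian.spectral_theorem
  have hT : IsUnit (S * U) := hS.mul (.of_mul_eq_one _ hU)
  have hPT : S * K * Sᴴ = S * U * diagonal (fun i => (d i : ℂ)) * (S * U)ᴴ := by
    rw [hspec, conjTranspose_mul]
    simp only [Matrix.mul_assoc]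
  have hRT : R = S * U * diagonal (fun i => ((1 - d i : ℝ) : ℂ)) * (S * U)ᴴ := by
    have hdiag : diagonal (fun i => ((1 - d i : ℝ) : ℂ)) = 1 - diagonal (fun i => (d i : ℂ)) := by
      simp only [← diagonal_one, diagonal_sub, Complex.ofReal_sub, Complex.ofReal_one]
    calc R = S * (U * Uᴴ) * Sᴴ - S * K * Sᴴ := by
          rw [hU, Matrix.mul_one, ← star_eq_conjTranspose, ← hPR, star_eq_conjTranspose,
            add_sub_cancel_left]
      _ = S * U * diagonal (fun i => ((1 - d i : ℝ) : ℂ)) * (S * U)ᴴ := by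
          rw [hdiag, hPT, Matrix.mul_sub, Matrix.sub_mul, Matrix.mul_one, conjTranspose_mul]
          simp only [Matrix.mul_assoc]
  have hd : ∀ i, 0 < 1 - d i := by
    rw [hRT] at hR
    have hdiag := (IsUnit.posDef_star_right_conjugate_iff hT).1 hR
    exact fun i => Complex.zero_lt_real.1 (posDef_diagonal_iff.1 hdiag i)
  refine ⟨S * U, fun i b => if b then d i else 1 - d i, hT, ?_, fun i => by simp, hPT, hRT⟩
  exact fun i => Bool.rec (hd i) (hK.eigenvalues_pos i)

theorem conjTranspose_mul_diagonal_mul_le {J : Type*} [Finite J] {T : Matrix I I ℂ} (hT : IsUnit T)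
    {p q : I → ℝ} (hp : ∀ i, 0 < p i) (hq : ∀ i, 0 ≤ q i) {W : Matrix I J ℂ} {Q : Matrix J J ℂ}
    (h : (fromBlocks (T * diagonal (fun i => (p i : ℂ)) * Tᴴ)
      (T * diagonal (fun i => (√(p i * q i) : ℂ)) * W)
      (T * diagonal (fun i => (√(p i * q i) : ℂ)) * W)ᴴ Q).PosSemidef) :
    Wᴴ * diagonal (fun i => (q i : ℂ)) * W ≤ Q := by
  set P := T * diagonal (fun i => (p i : ℂ)) * Tᴴ
  set C := T * diagonal (fun i => (√(p i * q i) : ℂ)) * W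
  have hP : P.PosDef := (IsUnit.posDef_star_right_conjugate_iff hT).2
    (posDef_diagonal_iff.2 fun i => Complex.zero_lt_real.2 (hp i))
  have hTT : Tᴴ * (T⁻¹)ᴴ = 1 := by
    rw [← conjTranspose_mul, nonsing_inv_mul T ((isUnit_iff_isUnit_det T).1 hT), conjTranspose_one]
  have hpq (i : I) : √(p i * q i) = p i * √(q i / p i) := by
    rw [Real.sqrt_mul (hp i).le, Real.sqrt_div (hq i), mul_div_left_comm, Real.div_sqrt, mul_comm]
  set K := (T⁻¹)ᴴ * diagonal (fun i => (√(q i / p i) : ℂ)) * W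
  have hPK : P * K = C := by
    calc P * K = T * diagonal (fun i => (p i : ℂ)) * (Tᴴ * (T⁻¹)ᴴ) *
          diagonal (fun i => (√(q i / p i) : ℂ)) * W := by simp only [P, K, Matrix.mul_assoc]
      _ = C := by
        rw [hTT, Matrix.mul_one, Matrix.mul_assoc T, diagonal_mul_diagonal]
        simp only [C, ← Complex.ofReal_mul, ← hpq]
  have hCK : Cᴴ * K = Wᴴ * diagonal (fun i => (q i : ℂ)) * W := by
    calc Cᴴ * K = Wᴴ * diagonal (fun i => (√(p i * q i) : ℂ)) * (Tᴴ * (T⁻¹)ᴴ) *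
          diagonal (fun i => (√(q i / p i) : ℂ)) * W := by
          simp only [C, K, conjTranspose_mul, diagonal_conjTranspose, Pi.star_def, Complex.star_def,
            Complex.conj_ofReal, Matrix.mul_assoc]
      _ = Wᴴ * diagonal (fun i => (q i : ℂ)) * W := by
        rw [hTT, Matrix.mul_one, Matrix.mul_assoc Wᴴ, diagonal_mul_diagonal]
        simp only [← Complex.ofReal_mul, hpq, mul_assoc, mul_div_cancel₀ _ (hp _).ne',
          Real.mul_self_sqrt (div_nonneg (hq _) (hp _).le)]
  have := hP.isUnit.invertible
  have hschur := (hP.fromBlocks₁₁ C Q).1 h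
  rwa [Matrix.mul_assoc, ← hPK,
    nonsing_inv_mul_cancel_left _ _ ((isUnit_iff_isUnit_det P).1 hP.isUnit), hPK, hCK,
    ← Matrix.le_iff] at hschur

end SimultaneousDiagonalization

theorem transpose_le_transpose_iff {I : Type*} {M N : Matrix I I ℂ} : Mᵀ ≤ Nᵀ ↔ M ≤ N := by
  rw [Matrix.le_iff, Matrix.le_iff, ← transpose_sub, posSemidef_transpose_iff]

theorem transpose_le_one_iff {I : Type*} [DecidableEq I] {M : Matrix I I ℂ} : Mᵀ ≤ 1 ↔ M ≤ 1 := by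
  rw [← transpose_le_transpose_iff, transpose_transpose, transpose_one]

section ColumnMatrix

variable {X A I : Type*}

/-- The `i`-th column of `T`, reshaped into a matrix `ℂ^X → ℂ^A`. -/
def columnMatrix (T : Matrix (X × A) I ℂ) (i : I) : Matrix A X ℂ :=
  Matrix.of fun a x => T (x, a) i

theorem columnMatrix_apply (T : Matrix (X × A) I ℂ) (i : I) (a : A) (x : X) :
    columnMatrix T i a x = T (x, a) i :=
  rfl

variable [Fintype I] [DecidableEq I]

theorem mul_diagonal_mul_conjTranspose_apply {K : Type*} (T : Matrix K I ℂ) (d : I → ℂ) (k l : K) :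
    (T * diagonal d * Tᴴ) k l = ∑ i, d i * (T k i * star (T l i)) := by
  rw [Matrix.mul_apply]
  exact Finset.sum_congr rfl fun i _ => by
    rw [mul_diagonal, conjTranspose_apply, mul_comm (T k i), mul_assoc]

theorem sum_smul_columnMatrix_mul_conjTranspose [Fintype X] (T : Matrix (X × A) I ℂ) (d : I → ℂ) :
    ∑ i, d i • (columnMatrix T i * (columnMatrix T i)ᴴ) =
      partialTraceFst (T * diagonal d * Tᴴ) := by
  ext a a'
  simp only [partialTraceFst_apply, mul_diagonal_mul_conjTranspose_apply]
  simp only [Matrix.sum_apply, Matrix.smul_apply, smul_eq_mul, Matrix.mul_apply,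
    conjTranspose_apply, columnMatrix_apply, Finset.mul_sum]
  exact Finset.sum_comm

theorem sum_smul_conjTranspose_mul_columnMatrix [Fintype A] (T : Matrix (X × A) I ℂ) (d : I → ℂ) :
    ∑ i, d i • ((columnMatrix T i)ᴴ * columnMatrix T i) =
      (partialTraceSnd (T * diagonal d * Tᴴ))ᵀ := by
  ext x x'
  simp only [transpose_apply, partialTraceSnd_apply, mul_diagonal_mul_conjTranspose_apply]
  simp only [Matrix.sum_apply, Matrix.smul_apply, smul_eq_mul, Matrix.mul_apply,
    conjTranspose_apply, columnMatrix_apply, Finset.mul_sum, mul_comm (star _)]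
  exact Finset.sum_comm

end ColumnMatrix

section DiagonalForm

variable {X Y A B : Type*} [Fintype X] [Fintype Y] [Fintype A] [Fintype B]
  [DecidableEq X] [DecidableEq Y] [DecidableEq A] [DecidableEq B]

/-- A family of matrices that is a contraction as a row with weights `p i true` and as a column with
weights `p i false`. -/
structure IsBalancedContraction {ι : Type*} [Fintype ι] (p : ι → Bool → ℝ)
    (v : ι → Matrix A X ℂ) : Prop where
  sum_conjTranspose_mul_le : ∑ i, (p i true : ℂ) • ((v i)ᴴ * v i) ≤ 1
  sum_mul_conjTranspose_le : ∑ i, (p i false : ℂ) • (v i * (v i)ᴴ) ≤ 1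

theorem isBalancedContraction_columnMatrix {I : Type*} [Fintype I] [DecidableEq I]
    {p : I → Bool → ℝ} {T : Matrix (X × A) I ℂ}
    (hsnd : partialTraceSnd (T * diagonal (fun i => (p i true : ℂ)) * Tᴴ) ≤ 1)
    (hfst : partialTraceFst (T * diagonal (fun i => (p i false : ℂ)) * Tᴴ) ≤ 1) :
    IsBalancedContraction p (columnMatrix T) where
  sum_conjTranspose_mul_le := by
    rwa [sum_smul_conjTranspose_mul_columnMatrix, transpose_le_one_iff]
  sum_mul_conjTranspose_le := by
    rwa [sum_smul_columnMatrix_mul_conjTranspose]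

theorem transpose_mul_diagonal_mul_conjTranspose {I K : Type*} [Fintype I] [DecidableEq I]
    (W : Matrix I K ℂ) (d : I → ℂ) : Wᵀ * diagonal d * (Wᵀ)ᴴ = (Wᴴ * diagonal d * W)ᵀ := by
  rw [transpose_mul, transpose_mul, diagonal_transpose, ← Matrix.mul_assoc]
  rfl

theorem isBalancedContraction_columnMatrix_transpose {I : Type*} [Fintype I] [DecidableEq I]
    {p : I → Bool → ℝ} {W : Matrix I (Y × B) ℂ}
    (hsnd : partialTraceSnd (Wᴴ * diagonal (fun i => (p i true : ℂ)) * W) ≤ 1)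
    (hfst : partialTraceFst (Wᴴ * diagonal (fun i => (p i false : ℂ)) * W) ≤ 1) :
    IsBalancedContraction p (columnMatrix Wᵀ) := by
  apply isBalancedContraction_columnMatrix <;> rw [transpose_mul_diagonal_mul_conjTranspose]
  · exact transpose_le_one_iff.2 hsnd
  · exact transpose_le_one_iff.2 hfst

theorem IsCertificate.exists_diagonal_form {C : Matrix (X × A) (Y × B) ℂ}
    {P₁ P₂ : Matrix (X × A) (X × A) ℂ} {Q₁ Q₂ : Matrix (Y × B) (Y × B) ℂ}
    (h : IsCertificate C P₁ P₂ Q₁ Q₂) (hP₁ : P₁.PosDef) (hP₂ : P₂.PosDef) :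
    ∃ (p : X × A → Bool → ℝ) (v : X × A → Matrix A X ℂ) (w : X × A → Matrix B Y ℂ),
      (∀ i b, 0 ≤ p i b) ∧ (∀ i, ∑ b, p i b = 1) ∧ IsBalancedContraction p v ∧
      IsBalancedContraction p w ∧
      ∀ k j, C k j = ∑ i, (√(p i true * p i false) : ℂ) * v i k.2 k.1 * w i j.2 j.1 := by
  obtain ⟨T, p, hT, hp0, hp, rfl, rfl⟩ := exists_simultaneous_diagonalization hP₂ hP₁
  set s : X × A → ℂ := fun i => (√(p i true * p i false) : ℂ)
  have hs : IsUnit (diagonal s) := isUnit_diagonal.2 <| Pi.isUnit_iff.2 fun i =>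
    (Complex.ofReal_ne_zero.2 (Real.sqrt_pos.2 (mul_pos (hp0 i _) (hp0 i _))).ne').isUnit
  obtain ⟨W, rfl⟩ : ∃ W : Matrix (X × A) (Y × B) ℂ, C = T * diagonal s * W := by
    refine ⟨(T * diagonal s)⁻¹ * C, (mul_nonsing_inv_cancel_left _ _ ?_).symm⟩
    exact (isUnit_iff_isUnit_det _).1 (hT.mul hs)
  have hQ₂ : Wᴴ * diagonal (fun i => (p i true : ℂ)) * W ≤ Q₂ :=
    conjTranspose_mul_diagonal_mul_le hT (fun i => hp0 i false) (fun i => (hp0 i true).le) <| by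
      simpa only [s, mul_comm (p _ false)] using h.posSemidef₁₂
  have hQ₁ : Wᴴ * diagonal (fun i => (p i false : ℂ)) * W ≤ Q₁ :=
    conjTranspose_mul_diagonal_mul_le hT (fun i => hp0 i true) (fun i => (hp0 i false).le)
      h.posSemidef₂₁
  refine ⟨p, columnMatrix T, columnMatrix Wᵀ, fun i b => (hp0 i b).le, hp,
    isBalancedContraction_columnMatrix h.left_snd_le h.left_fst_le,
    isBalancedContraction_columnMatrix_transpose
      ((partialTraceSnd_mono hQ₂).trans h.right_snd_le)
      ((partialTraceFst_mono hQ₁).trans h.right_fst_le), fun k j => ?_⟩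
  rw [Matrix.mul_apply]
  simp only [mul_diagonal, columnMatrix_apply, transpose_apply, s, mul_comm (T k _)]

end DiagonalForm

/-! ### Rounding by entangled contractions -/

section EntangledAmplitude

variable {X Y A B Q : Type*}

/-- The realignment of an operator on a bipartite space: `(X, A)` indexes the rows and the two
`Q`-indices the columns. -/
def realign : Matrix (A × Q) (X × Q) ℂ →ₗ[ℂ] Matrix (X × A) (Q × Q) ℂ where
  toFun S := Matrix.of fun i k => S (i.2, k.1) (i.1, k.2)
  map_add' _ _ := rfl
  map_smul' _ _ := rfl

theorem realign_apply (S : Matrix (A × Q) (X × Q) ℂ) (i : X × A) (k : Q × Q) :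
    realign S i k = S (i.2, k.1) (i.1, k.2) :=
  rfl

variable [Fintype Q] [DecidableEq Q]

/-- The amplitudes `∑ f g, ω f * ω g * S (a, f) (x, g) * S' (b, f) (y, g)` produced by the local
operators `S`, `S'` on a shared entangled state with Schmidt coefficients `ω`. -/
def entangledAmplitude (ω : Q → ℝ) :
    Matrix (A × Q) (X × Q) ℂ →ₗ[ℂ] Matrix (B × Q) (Y × Q) ℂ →ₗ[ℂ] Matrix (X × A) (Y × B) ℂ :=
  LinearMap.mk₂ ℂ
    (fun S S' => realign S * diagonal (fun k : Q × Q => (ω k.1 * ω k.2 : ℂ)) * (realign S')ᵀ)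
    (fun S T S' => by rw [map_add, Matrix.add_mul, Matrix.add_mul])
    (fun c S S' => by rw [map_smul, Matrix.smul_mul, Matrix.smul_mul])
    (fun S S' T' => by rw [map_add, transpose_add, Matrix.mul_add])
    (fun c S S' => by rw [map_smul, transpose_smul, Matrix.mul_smul])

theorem entangledAmplitude_eq (ω : Q → ℝ) (S : Matrix (A × Q) (X × Q) ℂ)
    (S' : Matrix (B × Q) (Y × Q) ℂ) :
    entangledAmplitude ω S S' =
      realign S * diagonal (fun k : Q × Q => (ω k.1 * ω k.2 : ℂ)) * (realign S')ᵀ :=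
  rfl

theorem entangledAmplitude_apply (ω : Q → ℝ) (S : Matrix (A × Q) (X × Q) ℂ)
    (S' : Matrix (B × Q) (Y × Q) ℂ) (i : X × A) (j : Y × B) :
    entangledAmplitude ω S S' i j =
      ∑ f, ∑ g, (ω f * ω g : ℂ) * S (i.2, f) (i.1, g) * S' (j.2, f) (j.1, g) := by
  rw [entangledAmplitude_eq, Matrix.mul_apply, Fintype.sum_prod_type]
  simp only [mul_diagonal, transpose_apply, realign_apply, mul_comm (S _ _)]

theorem entangledAmplitude_kronecker (ω : Q → ℝ) (v : Matrix A X ℂ) (w : Matrix B Y ℂ)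
    (M N : Matrix Q Q ℂ) (i : X × A) (j : Y × B) :
    entangledAmplitude ω (v ⊗ₖ M) (w ⊗ₖ N) i j =
      v i.2 i.1 * w j.2 j.1 * ∑ f, ∑ g, (ω f : ℂ) * ω g * M f g * N f g := by
  simp only [entangledAmplitude_apply, kroneckerMap_apply, Finset.mul_sum]
  exact Finset.sum_congr rfl fun f _ => Finset.sum_congr rfl fun g _ => by ring

theorem entangledAmplitude_ladderSum {ι : Type*} [Fintype ι] [DecidableEq ι] {p : ι → Bool → ℝ}
    (hp : ∀ i, ∑ b, p i b = 1) (hp0 : ∀ i b, 0 ≤ p i b) (v : ι → Matrix A X ℂ)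
    (w : ι → Matrix B Y ℂ) (k : X × A) (j : Y × B) :
    entangledAmplitude (fun f => √(bitWeight p f)) (ladderSum true v) (ladderSum true w) k j =
      ∑ i, (√(p i true * p i false) : ℂ) * v i k.2 k.1 * w i j.2 j.1 := by
  simp only [ladderSum, map_sum, LinearMap.sum_apply, Matrix.sum_apply,
    entangledAmplitude_kronecker, sum_sqrt_bitWeight_mul_ladder hp hp0, mul_ite, mul_zero,
    Finset.sum_ite_eq', Finset.mem_univ, if_true]
  exact Finset.sum_congr rfl fun i _ => by ring

theorem posSemidef_fromBlocks_gram {I J K : Type*} [Fintype K] [Finite I] [Finite J]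
    (U : Matrix K I ℂ) (V : Matrix K J ℂ) :
    (fromBlocks (Uᴴ * U) (Uᴴ * V) (Uᴴ * V)ᴴ (Vᴴ * V)).PosSemidef := by
  have h := posSemidef_conjTranspose_mul_self (fromCols U V)
  rwa [conjTranspose_fromCols_eq_fromRows_conjTranspose, fromRows_mul_fromCols,
    show Vᴴ * U = (Uᴴ * V)ᴴ by rw [conjTranspose_mul, conjTranspose_conjTranspose]] at h

theorem posSemidef_fromBlocks_mul_diagonal_mul {I J K : Type*} [Finite I] [Finite J] [Fintype K]
    [DecidableEq K] (S : Matrix I K ℂ) (T : Matrix J K ℂ) (c d : K → ℝ) :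
    (fromBlocks (S * diagonal (fun k => (c k ^ 2 : ℂ)) * Sᴴ)
      (S * diagonal (fun k => (c k * d k : ℂ)) * Tᵀ)
      (S * diagonal (fun k => (c k * d k : ℂ)) * Tᵀ)ᴴ
      (T * diagonal (fun k => (d k ^ 2 : ℂ)) * Tᴴ)ᵀ).PosSemidef := by
  have h := posSemidef_fromBlocks_gram (diagonal (fun k => (c k : ℂ)) * Sᴴ)
    (diagonal (fun k => (d k : ℂ)) * Tᵀ)
  have hstar (e : K → ℝ) : (diagonal fun k => (e k : ℂ))ᴴ = diagonal fun k => (e k : ℂ) := by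
    simp [diagonal_conjTranspose, Pi.star_def]
  have hmul (e e' : K → ℝ) :
      (diagonal fun k => (e k : ℂ)) * diagonal (fun k => (e' k : ℂ)) =
        diagonal fun k => (e k * e' k : ℂ) :=
    diagonal_mul_diagonal _ _
  convert h using 2 <;>
    simp only [conjTranspose_mul, conjTranspose_conjTranspose, transpose_mul, diagonal_transpose,
      hstar, Matrix.mul_assoc, sq, ← hmul]
  rfl

theorem partialTraceFst_realign [Fintype X] (ω : Q → ℝ) (S : Matrix (A × Q) (X × Q) ℂ) :
    partialTraceFst (realign S * diagonal (fun k : Q × Q => (ω k.1 ^ 2 : ℂ)) * (realign S)ᴴ) =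
      weightedPartialTrace (fun f => ω f ^ 2) (S * Sᴴ) := by
  ext a a'
  simp only [partialTraceFst_apply, mul_diagonal_mul_conjTranspose_apply, realign_apply,
    Fintype.sum_prod_type]
  rw [Finset.sum_comm]
  simp only [weightedPartialTrace_apply, Matrix.mul_apply, conjTranspose_apply,
    Fintype.sum_prod_type, Finset.mul_sum, Complex.ofReal_pow]

theorem partialTraceSnd_realign [Fintype A] (ω : Q → ℝ) (S : Matrix (A × Q) (X × Q) ℂ) :
    partialTraceSnd (realign S * diagonal (fun k : Q × Q => (ω k.2 ^ 2 : ℂ)) * (realign S)ᴴ) =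
      (weightedPartialTrace (fun f => ω f ^ 2) (Sᴴ * S))ᵀ := by
  ext x x'
  simp only [partialTraceSnd_apply, mul_diagonal_mul_conjTranspose_apply, realign_apply,
    Fintype.sum_prod_type_right]
  rw [Finset.sum_comm]
  simp only [transpose_apply, weightedPartialTrace_apply, Matrix.mul_apply, conjTranspose_apply,
    Fintype.sum_prod_type, Finset.mul_sum, Complex.ofReal_pow, mul_comm (star _)]

theorem half_smul_le_one {I : Type*} [DecidableEq I] {M : Matrix I I ℂ} (h : M ≤ (2 : ℂ) • 1) :
    ((1 / 2 : ℝ) : ℂ) • M ≤ 1 := by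
  have hslack : 1 - ((1 / 2 : ℝ) : ℂ) • M = ((1 / 2 : ℝ) : ℂ) • ((2 : ℂ) • 1 - M) := by
    push_cast
    module
  rw [Matrix.le_iff, hslack]
  exact (Matrix.le_iff.1 h).smul (Complex.zero_le_real.2 (by norm_num))

theorem isFeasible_half_smul_entangledAmplitude [Fintype X] [Fintype Y] [Fintype A] [Fintype B]
    [DecidableEq X] [DecidableEq Y] [DecidableEq A] [DecidableEq B] {ω : Q → ℝ}
    {S : Matrix (A × Q) (X × Q) ℂ} {S' : Matrix (B × Q) (Y × Q) ℂ}
    (hS : weightedPartialTrace (fun f => ω f ^ 2) (Sᴴ * S) ≤ (2 : ℂ) • 1)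
    (hS_star : weightedPartialTrace (fun f => ω f ^ 2) (S * Sᴴ) ≤ (2 : ℂ) • 1)
    (hS' : weightedPartialTrace (fun f => ω f ^ 2) (S'ᴴ * S') ≤ (2 : ℂ) • 1)
    (hS'_star : weightedPartialTrace (fun f => ω f ^ 2) (S' * S'ᴴ) ≤ (2 : ℂ) • 1) :
    IsFeasible (((1 / 2 : ℝ) : ℂ) • entangledAmplitude ω S S') := by
  have hblocks₁₂ := posSemidef_fromBlocks_mul_diagonal_mul (realign S) (realign S')
    (fun k => ω k.1) fun k => ω k.2
  have hblocks₂₁ := posSemidef_fromBlocks_mul_diagonal_mul (realign S) (realign S')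
    (fun k => ω k.2) fun k => ω k.1
  simp only [mul_comm (ω (Prod.snd _) : ℂ)] at hblocks₂₁
  refine ⟨_, _, _, _, posSemidef_fromBlocks_smul hblocks₁₂ one_half_pos.le,
    posSemidef_fromBlocks_smul hblocks₂₁ one_half_pos.le, ?_, ?_, ?_, ?_⟩
  · rw [map_smul, partialTraceFst_realign]
    exact half_smul_le_one hS_star
  · rw [map_smul, partialTraceSnd_realign, ← transpose_smul, transpose_le_one_iff]
    exact half_smul_le_one hS
  · rw [map_smul, partialTraceFst_transpose, ← transpose_smul, transpose_le_one_iff,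
      partialTraceFst_realign]
    exact half_smul_le_one hS'_star
  · rw [map_smul, partialTraceSnd_transpose, ← transpose_smul, transpose_le_one_iff,
      partialTraceSnd_realign, ← transpose_smul, transpose_le_one_iff]
    exact half_smul_le_one hS'

end EntangledAmplitude

section ContractionBound

variable {X Y A B : Type*} [Fintype X] [Fintype A] [Fintype B]
  [DecidableEq X] [DecidableEq Y] [DecidableEq A]

/-- The functional `φ` is bounded by `J` on the amplitudes produced by local contractions and a
shared entangled state on qubits indexed by `X × A`. -/
def IsContractionBound (φ : Matrix (X × A) (Y × B) ℂ →ₗ[ℂ] ℂ) (J : ℝ) : Prop :=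
  ∀ ω : (X × A → Bool) → ℝ, ∑ f, ω f ^ 2 = 1 → ∀ S S', Sᴴ * S ≤ 1 → S'ᴴ * S' ≤ 1 →
    ‖φ (entangledAmplitude ω S S')‖ ≤ J

theorem IsContractionBound.nonneg {φ : Matrix (X × A) (Y × B) ℂ →ₗ[ℂ] ℂ} {J : ℝ}
    (hJ : IsContractionBound φ J) : 0 ≤ J := by
  refine (norm_nonneg _).trans (hJ (Pi.single (fun _ => true) 1) ?_ 0 0 ?_ ?_)
  · simp [Pi.single_apply]
  all_goals
    rw [Matrix.mul_zero, Matrix.le_iff, sub_zero]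
    exact PosSemidef.one

end ContractionBound

section Rounding

variable {X Y A B : Type*} [Fintype X] [Fintype Y] [Fintype A] [Fintype B]
  [DecidableEq X] [DecidableEq Y] [DecidableEq A] [DecidableEq B]

theorem isFeasible_half_smul_entangledAmplitude_of_sq {ι : Type*} [Fintype ι] [DecidableEq ι]
    {p : ι → Bool → ℝ} (hp : ∀ i, ∑ b, p i b = 1) (hp0 : ∀ i b, 0 ≤ p i b)
    {v : ι → Matrix A X ℂ} {w : ι → Matrix B Y ℂ} (hv : IsBalancedContraction p v)
    (hw : IsBalancedContraction p w) {S : Matrix (A × (ι → Bool)) (X × (ι → Bool)) ℂ}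
    {S' : Matrix (B × (ι → Bool)) (Y × (ι → Bool)) ℂ}
    (hS : Sᴴ * S =
      ((ladderSum true v)ᴴ * ladderSum true v) * ((ladderSum true v)ᴴ * ladderSum true v))
    (hS_star : S * Sᴴ =
      (ladderSum true v * (ladderSum true v)ᴴ) * (ladderSum true v * (ladderSum true v)ᴴ))
    (hS' : S'ᴴ * S' =
      ((ladderSum true w)ᴴ * ladderSum true w) * ((ladderSum true w)ᴴ * ladderSum true w))
    (hS'_star : S' * S'ᴴ =
      (ladderSum true w * (ladderSum true w)ᴴ) * (ladderSum true w * (ladderSum true w)ᴴ)) :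
    IsFeasible (((1 / 2 : ℝ) : ℂ) • entangledAmplitude (fun f => √(bitWeight p f)) S S') := by
  apply isFeasible_half_smul_entangledAmplitude <;>
    simp only [Real.sq_sqrt (bitWeight_nonneg hp0 _), hS, hS_star, hS', hS'_star]
  · exact weightedPartialTrace_gram_ladderSum_sq_le hp hp0 true v hv.1 hv.2
  · exact weightedPartialTrace_cogram_ladderSum_sq_le hp hp0 true v hv.1 hv.2
  · exact weightedPartialTrace_gram_ladderSum_sq_le hp hp0 true w hw.1 hw.2
  · exact weightedPartialTrace_cogram_ladderSum_sq_le hp hp0 true w hw.1 hw.2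

theorem IsCertificate.norm_apply_le_sqrt {φ : Matrix (X × A) (Y × B) ℂ →ₗ[ℂ] ℂ} {J N : ℝ}
    (hJ : IsContractionBound φ J) (hN : ∀ D, IsFeasible D → ‖φ D‖ ≤ N)
    {C : Matrix (X × A) (Y × B) ℂ} {P₁ P₂ : Matrix (X × A) (X × A) ℂ}
    {Q₁ Q₂ : Matrix (Y × B) (Y × B) ℂ} (h : IsCertificate C P₁ P₂ Q₁ Q₂) (hP₁ : P₁.PosDef)
    (hP₂ : P₂.PosDef) : ‖φ C‖ ≤ √(J * (2 * N)) := by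
  obtain ⟨p, v, w, hp0, hp, hv, hw, hC⟩ := h.exists_diagonal_form hP₁ hP₂
  have hω : ∑ f, √(bitWeight p f) ^ 2 = 1 := by
    simp only [Real.sq_sqrt (bitWeight_nonneg hp0 _), sum_bitWeight hp]
  have hC_eq : C = entangledAmplitude (fun f => √(bitWeight p f)) (ladderSum true v)
      (ladderSum true w) := by
    ext k j
    rw [hC, entangledAmplitude_ladderSum hp hp0]
  rw [hC_eq]
  refine norm_bilinear_le_sqrt ((entangledAmplitude fun f => √(bitWeight p f)).compr₂ φ) _ _
    (hJ _ hω) fun S S' hS hS_star hS' hS'_star => ?_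
  have hfeas := hN _ (isFeasible_half_smul_entangledAmplitude_of_sq hp hp0 hv hw hS hS_star hS'
    hS'_star)
  rw [map_smul, norm_smul, Complex.norm_real, Real.norm_of_nonneg one_half_pos.le] at hfeas
  rw [LinearMap.compr₂_apply]
  linarith

theorem IsFeasible.norm_apply_le_sqrt {φ : Matrix (X × A) (Y × B) ℂ →ₗ[ℂ] ℂ} {J N : ℝ}
    (hJ : IsContractionBound φ J) (hN : ∀ D, IsFeasible D → ‖φ D‖ ≤ N)
    {C : Matrix (X × A) (Y × B) ℂ} (hC : IsFeasible C) : ‖φ C‖ ≤ √(J * (2 * N)) := by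
  have hscaled : ∀ t ∈ Set.Ioo (0 : ℝ) 1, t * ‖φ C‖ ≤ √(J * (2 * N)) := by
    rintro t ⟨ht₀, ht₁⟩
    obtain ⟨P₁, P₂, Q₁, Q₂, hP₁, hP₂, h⟩ := hC.exists_posDef_certificate ht₀.le ht₁
    have := h.norm_apply_le_sqrt hJ hN hP₁ hP₂
    rwa [map_smul, norm_smul, Complex.norm_real, Real.norm_of_nonneg ht₀.le] at this
  have hlim : Filter.Tendsto (fun t : ℝ => t * ‖φ C‖) (nhdsWithin 1 (Set.Iio 1))
      (nhds (1 * ‖φ C‖)) :=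
    ((continuous_id.mul continuous_const).tendsto 1).mono_left nhdsWithin_le_nhds
  rw [one_mul] at hlim
  exact le_of_tendsto hlim (Filter.mem_of_superset (Ioo_mem_nhdsLT zero_lt_one) hscaled)

theorem IsFeasible.norm_apply_le_sum (φ : Matrix (X × A) (Y × B) ℂ →ₗ[ℂ] ℂ)
    {C : Matrix (X × A) (Y × B) ℂ} (hC : IsFeasible C) :
    ‖φ C‖ ≤ ∑ i, ∑ j, ‖φ (Matrix.single i j 1)‖ := by
  have hsum : φ C = ∑ i, ∑ j, C i j * φ (Matrix.single i j 1) := by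
    conv_lhs => rw [matrix_eq_sum_single C]
    simp only [map_sum]
    refine Finset.sum_congr rfl fun i _ => Finset.sum_congr rfl fun j _ => ?_
    rw [← smul_eq_mul, ← map_smul, smul_single, smul_eq_mul, mul_one]
  rw [hsum]
  refine (norm_sum_le _ _).trans (Finset.sum_le_sum fun i _ => (norm_sum_le _ _).trans
    (Finset.sum_le_sum fun j _ => ?_))
  rw [norm_mul]
  exact mul_le_of_le_one_left (norm_nonneg _) (hC.norm_apply_le_one i j)

theorem IsFeasible.norm_apply_le_two_mul {φ : Matrix (X × A) (Y × B) ℂ →ₗ[ℂ] ℂ} {J : ℝ}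
    (hJ : IsContractionBound φ J) {C : Matrix (X × A) (Y × B) ℂ} (hC : IsFeasible C) :
    ‖φ C‖ ≤ 2 * J := by
  set T : Set ℝ := {r | ∃ D, IsFeasible D ∧ ‖φ D‖ = r}
  have hbdd : BddAbove T := by
    refine ⟨∑ i, ∑ j, ‖φ (Matrix.single i j 1)‖, ?_⟩
    rintro _ ⟨D, hD, rfl⟩
    exact hD.norm_apply_le_sum φ
  have hle (D) (hD : IsFeasible D) : ‖φ D‖ ≤ sSup T := le_csSup hbdd ⟨D, hD, rfl⟩
  have hsqrt : sSup T ≤ √(J * (2 * sSup T)) := by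
    refine csSup_le ⟨_, C, hC, rfl⟩ ?_
    rintro _ ⟨D, hD, rfl⟩
    exact hD.norm_apply_le_sqrt hJ hle
  refine (hle C hC).trans ?_
  by_contra! hlt
  have hpos : 0 < sSup T := (mul_nonneg two_pos.le hJ.nonneg).trans_lt hlt
  nlinarith [(Real.le_sqrt' hpos).1 hsqrt]

end Rounding

/-! ### Correlations and Choi matrices -/

section Compression

variable {I K : Type*} [Fintype K]

/-- The compression `⟨ψ| M |ψ⟩` of the second tensor leg of `M` to the vector `ψ`. -/
def compression (ψ : K → ℂ) (M : Matrix (I × K) (I × K) ℂ) : Matrix I I ℂ :=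
  Matrix.of fun i i' => star ψ ⬝ᵥ (M.submatrix (Prod.mk i) (Prod.mk i') *ᵥ ψ)

theorem compression_apply (ψ : K → ℂ) (M : Matrix (I × K) (I × K) ℂ) (i i' : I) :
    compression ψ M i i' = star ψ ⬝ᵥ (M.submatrix (Prod.mk i) (Prod.mk i') *ᵥ ψ) :=
  rfl

theorem compression_add (ψ : K → ℂ) (M N : Matrix (I × K) (I × K) ℂ) :
    compression ψ (M + N) = compression ψ M + compression ψ N := by
  ext i i'
  simp only [compression_apply, submatrix_add, Pi.add_apply, add_mulVec, dotProduct_add,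
    Matrix.add_apply]

theorem conjTranspose_compression (ψ : K → ℂ) (M : Matrix (I × K) (I × K) ℂ) :
    (compression ψ M)ᴴ = compression ψ Mᴴ := by
  ext i i'
  rw [conjTranspose_apply, compression_apply, compression_apply, ← star_dotProduct, star_mulVec,
    ← dotProduct_mulVec, conjTranspose_submatrix]

theorem dotProduct_compression_mulVec [Fintype I] (ψ : K → ℂ)
    (M : Matrix (I × K) (I × K) ℂ) (g : I → ℂ) :
    star g ⬝ᵥ (compression ψ M *ᵥ g) =
      star (fun q : I × K => g q.1 * ψ q.2) ⬝ᵥ (M *ᵥ fun q => g q.1 * ψ q.2) := by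
  simp only [dotProduct, mulVec, compression_apply, submatrix_apply, Fintype.sum_prod_type,
    Pi.star_apply, star_mul', Finset.mul_sum, Finset.sum_mul]
  refine Finset.sum_congr rfl fun i _ => ?_
  rw [Finset.sum_comm]
  refine Finset.sum_congr rfl fun k _ => Finset.sum_congr rfl fun i' _ =>
    Finset.sum_congr rfl fun k' _ => ?_
  ring

theorem posSemidef_compression [Finite I] (ψ : K → ℂ) {M : Matrix (I × K) (I × K) ℂ}
    (hM : M.PosSemidef) : (compression ψ M).PosSemidef := by
  cases nonempty_fintype I
  refine .of_dotProduct_mulVec_nonneg ?_ fun g => ?_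
  · rw [IsHermitian, conjTranspose_compression, hM.isHermitian.eq]
  · rw [dotProduct_compression_mulVec]
    exact hM.dotProduct_mulVec_nonneg _

end Compression

section Correlation

variable {I J Q Q' : Type*} [Fintype Q] [Fintype Q']

/-- The matrix of the correlations `⟪ψ, (E i i' ⊗ F j j') ψ⟫` of two block operator matrices in the
state `ψ`. -/
def correlationMatrix (E : Matrix (I × Q) (I × Q) ℂ) (F : Matrix (J × Q') (J × Q') ℂ)
    (ψ : Q × Q' → ℂ) : Matrix (I × J) (I × J) ℂ :=
  compression ψ ((E ⊗ₖ F).submatrix (Equiv.prodProdProdComm I J Q Q')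
    (Equiv.prodProdProdComm I J Q Q'))

theorem correlationMatrix_apply (E : Matrix (I × Q) (I × Q) ℂ) (F : Matrix (J × Q') (J × Q') ℂ)
    (ψ : Q × Q' → ℂ) (u v : I × J) :
    correlationMatrix E F ψ u v =
      star ψ ⬝ᵥ ((E.submatrix (Prod.mk u.1) (Prod.mk v.1) ⊗ₖ
        F.submatrix (Prod.mk u.2) (Prod.mk v.2)) *ᵥ ψ) :=
  rfl

theorem correlationMatrix_add_left (E E' : Matrix (I × Q) (I × Q) ℂ)
    (F : Matrix (J × Q') (J × Q') ℂ) (ψ : Q × Q' → ℂ) :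
    correlationMatrix (E + E') F ψ = correlationMatrix E F ψ + correlationMatrix E' F ψ := by
  simp only [correlationMatrix, add_kronecker, submatrix_add, Pi.add_apply, compression_add]

theorem correlationMatrix_add_right (E : Matrix (I × Q) (I × Q) ℂ)
    (F F' : Matrix (J × Q') (J × Q') ℂ) (ψ : Q × Q' → ℂ) :
    correlationMatrix E (F + F') ψ = correlationMatrix E F ψ + correlationMatrix E F' ψ := by
  simp only [correlationMatrix, kronecker_add, submatrix_add, Pi.add_apply, compression_add]

theorem posSemidef_correlationMatrix [Finite I] [Finite J] {E : Matrix (I × Q) (I × Q) ℂ}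
    {F : Matrix (J × Q') (J × Q') ℂ} (hE : E.PosSemidef) (hF : F.PosSemidef) (ψ : Q × Q' → ℂ) :
    (correlationMatrix E F ψ).PosSemidef :=
  posSemidef_compression ψ ((hE.kronecker hF).submatrix _)

end Correlation

section Stochastic

variable {X A Q : Type*} [Fintype A] [DecidableEq X] [DecidableEq Q]

/-- Stochastic operator matrices over `(X, A)` on `ℂ^Q`, written as a single block matrix. -/
structure IsStochasticBlockMatrix (E : Matrix ((X × A) × Q) ((X × A) × Q) ℂ) : Prop where
  posSemidef : E.PosSemidef
  sum_block (x x' : X) :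
    ∑ a, E.submatrix (Prod.mk (x, a)) (Prod.mk (x', a)) = if x = x' then 1 else 0

theorem isStochasticMatrixFam_iff [Fintype X] {d : ℕ}
    {E : X → X → A → A → Matrix (Fin d) (Fin d) ℂ} :
    IsStochasticMatrixFam E ↔ IsStochasticBlockMatrix
      (Matrix.of fun p q : (X × A) × Fin d => E p.1.1 q.1.1 p.1.2 q.1.2 p.2 q.2) :=
  ⟨fun h => ⟨h.1, h.2⟩, fun h => ⟨h.posSemidef, h.sum_block⟩⟩

theorem IsStochasticBlockMatrix.reindex {R : Type*} [DecidableEq R] (e : R ≃ Q)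
    {E : Matrix ((X × A) × Q) ((X × A) × Q) ℂ} (hE : IsStochasticBlockMatrix E) :
    IsStochasticBlockMatrix (E.submatrix (Prod.map id e) (Prod.map id e)) where
  posSemidef := hE.posSemidef.submatrix _
  sum_block x x' := by
    calc ∑ a, (E.submatrix (Prod.map id e) (Prod.map id e)).submatrix (Prod.mk (x, a))
          (Prod.mk (x', a))
        = (∑ a, E.submatrix (Prod.mk (x, a)) (Prod.mk (x', a))).submatrix e e := by
          ext f g
          simp only [Matrix.sum_apply, submatrix_apply, Prod.map_apply, id]
      _ = if x = x' then 1 else 0 := by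
          rw [hE.sum_block]
          split_ifs
          exacts [submatrix_one_equiv e, rfl]

theorem sum_correlationMatrix_diag {Y B Q' : Type*} [Fintype B] [DecidableEq Y] [Fintype Q]
    [Fintype Q'] [DecidableEq Q'] {E : Matrix ((X × A) × Q) ((X × A) × Q) ℂ}
    {F : Matrix ((Y × B) × Q') ((Y × B) × Q') ℂ} (hE : IsStochasticBlockMatrix E)
    (hF : IsStochasticBlockMatrix F) {ψ : Q × Q' → ℂ} (hψ : ∑ q, ‖ψ q‖ ^ 2 = 1) (x : X) (y : Y) :
    ∑ a, ∑ b, correlationMatrix E F ψ ((x, a), (y, b)) ((x, a), (y, b)) = 1 := by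
  have hkron : ∑ a, ∑ b, E.submatrix (Prod.mk (x, a)) (Prod.mk (x, a)) ⊗ₖ
      F.submatrix (Prod.mk (y, b)) (Prod.mk (y, b)) = 1 := by
    calc _ = (∑ a, E.submatrix (Prod.mk (x, a)) (Prod.mk (x, a))) ⊗ₖ
          (∑ b, F.submatrix (Prod.mk (y, b)) (Prod.mk (y, b))) := by
          ext i j
          simp only [kroneckerMap_apply, Matrix.sum_apply, Finset.sum_mul_sum]
      _ = 1 := by
          rw [hE.sum_block, hF.sum_block, if_pos rfl, if_pos rfl, one_kronecker_one]
  simp only [correlationMatrix_apply, ← dotProduct_sum, ← sum_mulVec, hkron, one_mulVec]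
  simp only [dotProduct, Pi.star_apply, Complex.star_def, Complex.conj_mul']
  exact_mod_cast hψ

end Stochastic

section Pairing

variable {I J : Type*} [Fintype I] [Fintype J]

/-- The bilinear pairing of matrices with vectors on `I × J`. -/
def pairing (g : I × J → ℂ) : Matrix I J ℂ →ₗ[ℂ] ℂ where
  toFun C := ∑ v, g v * C v.1 v.2
  map_add' C D := by simp only [Matrix.add_apply, mul_add, Finset.sum_add_distrib]
  map_smul' c C := by
    simp only [Matrix.smul_apply, smul_eq_mul, mul_left_comm, Finset.mul_sum, RingHom.id_apply]

theorem pairing_apply (g : I × J → ℂ) (C : Matrix I J ℂ) :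
    pairing g C = ∑ v, g v * C v.1 v.2 :=
  rfl

theorem norm_dotProduct_sq_le (z w : I → ℂ) :
    ‖z ⬝ᵥ w‖ ^ 2 ≤ (∑ i, ‖z i‖ ^ 2) * ∑ i, ‖w i‖ ^ 2 := by
  calc ‖z ⬝ᵥ w‖ ^ 2 ≤ (∑ i, ‖z i‖ * ‖w i‖) ^ 2 := by
        gcongr
        exact (norm_sum_le _ _).trans_eq (Finset.sum_congr rfl fun i _ => norm_mul _ _)
    _ ≤ _ := Finset.sum_mul_sq_le_sq_mul_sq _ _ _

theorem star_dotProduct_self_eq_sum (z : I → ℂ) : star z ⬝ᵥ z = ((∑ i, ‖z i‖ ^ 2 : ℝ) : ℂ) := by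
  push_cast
  exact Finset.sum_congr rfl fun i _ => Complex.conj_mul' _

theorem star_dotProduct_conjTranspose_mul_self_mulVec (Z : Matrix J I ℂ) (z : I → ℂ) :
    star z ⬝ᵥ ((Zᴴ * Z) *ᵥ z) = ((∑ j, ‖(Z *ᵥ z) j‖ ^ 2 : ℝ) : ℂ) := by
  rw [← mulVec_mulVec, dotProduct_mulVec, vecMul_conjTranspose, star_star,
    star_dotProduct_self_eq_sum]

theorem norm_star_dotProduct_mulVec_le {M : Matrix I I ℂ} (hM : ∀ i j, ‖M i j‖ ≤ 1)
    (g : I → ℂ) : ‖star g ⬝ᵥ (M *ᵥ g)‖ ≤ (∑ i, ‖g i‖) ^ 2 := by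
  have hmulVec (i) : ‖(M *ᵥ g) i‖ ≤ ∑ j, ‖g j‖ :=
    (norm_sum_le _ _).trans (Finset.sum_le_sum fun j _ => by
      rw [norm_mul]
      exact mul_le_of_le_one_left (norm_nonneg _) (hM i j))
  calc ‖star g ⬝ᵥ (M *ᵥ g)‖ ≤ ∑ i, ‖g i‖ * ‖(M *ᵥ g) i‖ :=
        (norm_sum_le _ _).trans_eq (Finset.sum_congr rfl fun i _ => by
          rw [norm_mul, Pi.star_apply, norm_star])
    _ ≤ ∑ i, ‖g i‖ * ∑ j, ‖g j‖ := by gcongr with i; exact hmulVec i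
    _ = (∑ i, ‖g i‖) ^ 2 := by rw [← Finset.sum_mul, sq]

end Pairing

section Choi

variable {X Y A B : Type*} [DecidableEq X] [DecidableEq Y]

/-- The Choi matrix of a map `M_{X × Y} → M_{A × B}`, with indices regrouped into those of Alice,
`X × A`, and those of Bob, `Y × B`. -/
def choiMatrix (Γ : Matrix (X × Y) (X × Y) ℂ →ₗ[ℂ] Matrix (A × B) (A × B) ℂ) :
    Matrix ((X × A) × (Y × B)) ((X × A) × (Y × B)) ℂ :=
  Matrix.of fun u v => Γ (Matrix.single u.1.1 v.1.1 1 ⊗ₖ Matrix.single u.2.1 v.2.1 1)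
    (u.1.2, u.2.2) (v.1.2, v.2.2)

theorem choiMatrix_apply (Γ : Matrix (X × Y) (X × Y) ℂ →ₗ[ℂ] Matrix (A × B) (A × B) ℂ)
    (u v : (X × A) × (Y × B)) :
    choiMatrix Γ u v = Γ (Matrix.single u.1.1 v.1.1 1 ⊗ₖ Matrix.single u.2.1 v.2.1 1)
      (u.1.2, u.2.2) (v.1.2, v.2.2) :=
  rfl

theorem single_one_kronecker_single_one (x x' : X) (y y' : Y) :
    Matrix.single x x' (1 : ℂ) ⊗ₖ Matrix.single y y' (1 : ℂ) =
      Matrix.single (x, y) (x', y') 1 := by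
  rw [Matrix.single_kronecker_single, mul_one]

variable [Fintype X] [Fintype Y]

/-- The linear map with prescribed Choi matrix. -/
noncomputable def ofChoiMatrix (K : Matrix ((X × A) × (Y × B)) ((X × A) × (Y × B)) ℂ) :
    Matrix (X × Y) (X × Y) ℂ →ₗ[ℂ] Matrix (A × B) (A × B) ℂ :=
  Matrix.liftLinear ℂ fun w w' => LinearMap.toSpanSingleton ℂ _
    (Matrix.of fun p q => K ((w.1, p.1), (w.2, p.2)) ((w'.1, q.1), (w'.2, q.2)))

theorem ofChoiMatrix_single_kronecker_single
    (K : Matrix ((X × A) × (Y × B)) ((X × A) × (Y × B)) ℂ) (x x' : X) (y y' : Y) :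
    ofChoiMatrix K (Matrix.single x x' 1 ⊗ₖ Matrix.single y y' 1) =
      Matrix.of fun p q => K ((x, p.1), (y, p.2)) ((x', q.1), (y', q.2)) := by
  rw [single_one_kronecker_single_one, ofChoiMatrix, liftLinear_single,
    LinearMap.toSpanSingleton_apply, one_smul]

theorem choiMatrix_ofChoiMatrix (K : Matrix ((X × A) × (Y × B)) ((X × A) × (Y × B)) ℂ) :
    choiMatrix (ofChoiMatrix K) = K := by
  ext u v
  rw [choiMatrix_apply, ofChoiMatrix_single_kronecker_single, of_apply]

end Choi

section QCorrelation

variable {X Y A B : Type} [Fintype X] [Fintype Y] [Fintype A] [Fintype B]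
  [DecidableEq X] [DecidableEq Y]
  {Γ : Matrix (X × Y) (X × Y) ℂ →ₗ[ℂ] Matrix (A × B) (A × B) ℂ}

theorem IsQCorrelation.exists_choiMatrix_eq (hΓ : IsQCorrelation Γ) :
    ∃ (d d' : ℕ) (E : Matrix ((X × A) × Fin d) ((X × A) × Fin d) ℂ)
      (F : Matrix ((Y × B) × Fin d') ((Y × B) × Fin d') ℂ) (ψ : Fin d × Fin d' → ℂ),
      IsStochasticBlockMatrix E ∧ IsStochasticBlockMatrix F ∧ ∑ q, ‖ψ q‖ ^ 2 = 1 ∧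
        choiMatrix Γ = correlationMatrix E F ψ := by
  obtain ⟨d, d', E, F, ψ, hE, hF, hψ, hΓ⟩ := hΓ
  refine ⟨d, d', _, _, ψ, isStochasticMatrixFam_iff.1 hE, isStochasticMatrixFam_iff.1 hF, hψ, ?_⟩
  ext u v
  rw [choiMatrix_apply, hΓ]
  rfl

theorem IsQCorrelation.posSemidef_choiMatrix (hΓ : IsQCorrelation Γ) :
    (choiMatrix Γ).PosSemidef := by
  obtain ⟨d, d', E, F, ψ, hE, hF, -, hΓ⟩ := hΓ.exists_choiMatrix_eq
  rw [hΓ]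
  exact posSemidef_correlationMatrix hE.posSemidef hF.posSemidef ψ

theorem IsQCorrelation.choiMatrix_diag_le_one (hΓ : IsQCorrelation Γ)
    (u : (X × A) × (Y × B)) : choiMatrix Γ u u ≤ 1 := by
  have hdiag (v) : 0 ≤ choiMatrix Γ v v := hΓ.posSemidef_choiMatrix.diag_nonneg
  obtain ⟨d, d', E, F, ψ, hE, hF, hψ, hΓ⟩ := hΓ.exists_choiMatrix_eq
  obtain ⟨⟨x, a⟩, ⟨y, b⟩⟩ := u
  rw [← sum_correlationMatrix_diag hE hF hψ x y, ← hΓ]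
  calc choiMatrix Γ ((x, a), (y, b)) ((x, a), (y, b))
      ≤ ∑ b', choiMatrix Γ ((x, a), (y, b')) ((x, a), (y, b')) :=
        Finset.single_le_sum (f := fun b' => choiMatrix Γ ((x, a), (y, b')) ((x, a), (y, b')))
          (fun b' _ => hdiag _) (Finset.mem_univ b)
    _ ≤ ∑ a', ∑ b', choiMatrix Γ ((x, a'), (y, b')) ((x, a'), (y, b')) :=
        Finset.single_le_sum
          (f := fun a' => ∑ b', choiMatrix Γ ((x, a'), (y, b')) ((x, a'), (y, b')))
          (fun a' _ => Finset.sum_nonneg fun b' _ => hdiag _) (Finset.mem_univ a)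

theorem isQCorrelation_ofChoiMatrix {Q Q' : Type*} [Fintype Q] [Fintype Q'] [DecidableEq Q]
    [DecidableEq Q'] {E : Matrix ((X × A) × Q) ((X × A) × Q) ℂ}
    {F : Matrix ((Y × B) × Q') ((Y × B) × Q') ℂ} {ψ : Q × Q' → ℂ}
    (hE : IsStochasticBlockMatrix E) (hF : IsStochasticBlockMatrix F)
    (hψ : ∑ q, ‖ψ q‖ ^ 2 = 1) : IsQCorrelation (ofChoiMatrix (correlationMatrix E F ψ)) := by
  let e := (Fintype.equivFin Q).symm
  let e' := (Fintype.equivFin Q').symm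
  refine ⟨Fintype.card Q, Fintype.card Q',
    fun x x' a a' => Matrix.of fun f g => E ((x, a), e f) ((x', a'), e g),
    fun y y' b b' => Matrix.of fun f g => F ((y, b), e' f) ((y', b'), e' g),
    ψ ∘ e.prodCongr e', isStochasticMatrixFam_iff.2 (hE.reindex e),
    isStochasticMatrixFam_iff.2 (hF.reindex e'), ?_, fun x x' y y' => ?_⟩
  · rw [← hψ]
    exact (e.prodCongr e').sum_comp fun q => ‖ψ q‖ ^ 2
  · rw [ofChoiMatrix_single_kronecker_single]
    ext p q
    simp only [of_apply, correlationMatrix_apply, dotProduct, mulVec]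
    rw [← (e.prodCongr e').sum_comp]
    refine Finset.sum_congr rfl fun r _ => ?_
    rw [← (e.prodCongr e').sum_comp]
    rfl

end QCorrelation

section GameValue

variable {X Y A B : Type} [Fintype X] [Fintype Y] [Fintype A] [Fintype B]
  [DecidableEq X] [DecidableEq Y] {HR : Type*} [NormedAddCommGroup HR] [InnerProductSpace ℂ HR]

/-- The vector of overlaps of the question state `ξ` with the answer vector `γ`: its quadratic
form against the Choi matrix is the value of the rank-one game defined by `ξ` and `γ`. -/
noncomputable def gameVector (ξ : X × Y → HR) (γ : A × B → HR) : (X × A) × (Y × B) → ℂ :=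
  fun v => ⟪ξ (v.1.1, v.2.1), γ (v.1.2, v.2.2)⟫

theorem gameValue_eq_sum_dotProduct
    (Γ : Matrix (X × Y) (X × Y) ℂ →ₗ[ℂ] Matrix (A × B) (A × B) ℂ) (ξ : X × Y → HR) (n : ℕ)
    (γ : Fin n → (A × B → HR)) :
    gameValue Γ ξ n γ =
      ∑ k, star (gameVector ξ (γ k)) ⬝ᵥ (choiMatrix Γ *ᵥ gameVector ξ (γ k)) := by
  have hsum (f : (X × A) × (Y × B) → ℂ) :
      ∑ u, f u = ∑ p : A × B, ∑ w : X × Y, f ((w.1, p.1), (w.2, p.2)) := by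
    rw [← (Equiv.prodProdProdComm X Y A B).sum_comp, Fintype.sum_prod_type_right]
    rfl
  refine Finset.sum_congr rfl fun k _ => ?_
  rw [dotProduct, hsum]
  refine Finset.sum_congr rfl fun p _ => ?_
  rw [Finset.sum_comm]
  refine Finset.sum_congr rfl fun w _ => ?_
  rw [mulVec, dotProduct, hsum]
  simp only [Finset.mul_sum, Pi.star_apply, gameVector, Complex.star_def, inner_conj_symm,
    choiMatrix_apply, single_one_kronecker_single_one]
  exact Finset.sum_congr rfl fun q _ => Finset.sum_congr rfl fun w' _ => by ring

/-- The value `ω_{Q_q}(ξ, P)` for `P = ∑ k, γ_k γ_k*`. -/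
noncomputable def quantumValue (ξ : X × Y → HR) (n : ℕ) (γ : Fin n → (A × B → HR)) : ℝ :=
  sSup {t : ℝ | ∃ Γ, IsQCorrelation Γ ∧ (t : ℂ) = gameValue Γ ξ n γ}

variable (ξ : X × Y → HR) (n : ℕ) (γ : Fin n → (A × B → HR))

theorem bddAbove_quantumValue :
    BddAbove {t : ℝ | ∃ Γ, IsQCorrelation Γ ∧ (t : ℂ) = gameValue Γ ξ n γ} := by
  refine ⟨∑ k, (∑ v, ‖gameVector ξ (γ k) v‖) ^ 2, ?_⟩
  rintro t ⟨Γ, hΓ, ht⟩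
  calc t ≤ ‖(t : ℂ)‖ := by rw [Complex.norm_real]; exact le_abs_self t
    _ ≤ _ := by
      rw [ht, gameValue_eq_sum_dotProduct]
      exact (norm_sum_le _ _).trans (Finset.sum_le_sum fun k _ =>
        norm_star_dotProduct_mulVec_le (norm_apply_le_one_of_posSemidef hΓ.posSemidef_choiMatrix
          hΓ.choiMatrix_diag_le_one) _)

theorem IsQCorrelation.gameValue_nonneg
    {Γ : Matrix (X × Y) (X × Y) ℂ →ₗ[ℂ] Matrix (A × B) (A × B) ℂ} (hΓ : IsQCorrelation Γ) :
    0 ≤ gameValue Γ ξ n γ := by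
  rw [gameValue_eq_sum_dotProduct]
  exact Finset.sum_nonneg fun k _ => hΓ.posSemidef_choiMatrix.dotProduct_mulVec_nonneg _

theorem quantumValue_nonneg : 0 ≤ quantumValue ξ n γ := by
  refine Real.sSup_nonneg ?_
  rintro t ⟨Γ, hΓ, ht⟩
  exact Complex.zero_le_real.1 (ht ▸ hΓ.gameValue_nonneg ξ n γ)

variable {ξ n γ} {Γ : Matrix (X × Y) (X × Y) ℂ →ₗ[ℂ] Matrix (A × B) (A × B) ℂ}

theorem IsQCorrelation.gameValue_le_quantumValue (hΓ : IsQCorrelation Γ) :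
    gameValue Γ ξ n γ ≤ (quantumValue ξ n γ : ℂ) := by
  have hre := Complex.eq_re_of_ofReal_le (r := 0) (by simpa using hΓ.gameValue_nonneg ξ n γ)
  rw [hre]
  exact Complex.real_le_real.2 (le_csSup (bddAbove_quantumValue ξ n γ) ⟨Γ, hΓ, hre.symm⟩)

theorem IsQCorrelation.dotProduct_choiMatrix_le_quantumValue (hΓ : IsQCorrelation Γ)
    (k : Fin n) : star (gameVector ξ (γ k)) ⬝ᵥ (choiMatrix Γ *ᵥ gameVector ξ (γ k)) ≤
      (quantumValue ξ n γ : ℂ) := by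
  refine le_trans ?_ hΓ.gameValue_le_quantumValue
  rw [gameValue_eq_sum_dotProduct]
  exact Finset.single_le_sum
    (f := fun k => star (gameVector ξ (γ k)) ⬝ᵥ (choiMatrix Γ *ᵥ gameVector ξ (γ k)))
    (fun k _ => hΓ.posSemidef_choiMatrix.dotProduct_mulVec_nonneg _) (Finset.mem_univ k)

end GameValue

section SchmidtState

variable {Q : Type*} [DecidableEq Q]

/-- The vector `∑ f, ω f • (e_f ⊗ e_f)` of `ℂ^Q ⊗ ℂ^Q`. -/
def schmidtState (ω : Q → ℝ) : Q × Q → ℂ :=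
  fun q => if q.1 = q.2 then ω q.1 else 0

variable [Fintype Q]

theorem schmidtState_dotProduct (ω : Q → ℝ) (z : Q × Q → ℂ) :
    schmidtState ω ⬝ᵥ z = ∑ f, ω f * z (f, f) := by
  simp only [dotProduct, schmidtState, Fintype.sum_prod_type, ite_mul, zero_mul,
    Finset.sum_ite_eq, Finset.mem_univ, if_true]

theorem sum_norm_sq_schmidtState (ω : Q → ℝ) : ∑ q, ‖schmidtState ω q‖ ^ 2 = ∑ f, ω f ^ 2 := by
  simp only [schmidtState, Fintype.sum_prod_type, apply_ite, ite_pow, Complex.norm_real,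
    Real.norm_eq_abs, sq_abs, norm_zero, ne_eq, OfNat.ofNat_ne_zero, not_false_eq_true, zero_pow,
    Finset.sum_ite_eq, Finset.mem_univ, if_true]

end SchmidtState

section KrausRow

variable {X Y A B Q : Type*}

/-- The row of the blocks `S_{a,x}` of an operator `S : ℂ^X ⊗ ℂ^Q → ℂ^A ⊗ ℂ^Q`, whose Gram matrix
is the block matrix `S_{a,x}ᴴ * S_{a',x'}`. -/
def krausRow (S : Matrix (A × Q) (X × Q) ℂ) : Matrix Q ((X × A) × Q) ℂ :=
  Matrix.of fun h u => S (u.1.2, h) (u.1.1, u.2)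

variable [Fintype A] [Fintype Q]

theorem sum_block_krausRow_gram (S : Matrix (A × Q) (X × Q) ℂ) (x x' : X) :
    ∑ a, ((krausRow S)ᴴ * krausRow S).submatrix (Prod.mk (x, a)) (Prod.mk (x', a)) =
      (Sᴴ * S).submatrix (Prod.mk x) (Prod.mk x') := by
  ext f g
  simp only [Matrix.sum_apply, submatrix_apply, Matrix.mul_apply, conjTranspose_apply, krausRow,
    of_apply, Fintype.sum_prod_type]

variable [DecidableEq Q]

theorem exists_isStochasticBlockMatrix_krausRow_gram_add [Finite X] [DecidableEq X] [Nonempty A]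
    {S : Matrix (A × Q) (X × Q) ℂ} (hS : Sᴴ * S ≤ 1) :
    ∃ D, D.PosSemidef ∧ IsStochasticBlockMatrix ((krausRow S)ᴴ * krausRow S + D) := by
  classical
  obtain ⟨a₀⟩ := ‹Nonempty A›
  have hsingle : (0 : A → ℂ) ≤ Pi.single a₀ 1 := Pi.single_nonneg.2 zero_le_one
  have hcoord := posSemidef_diagonal_iff.2 fun a => hsingle a
  have hD := ((Matrix.le_iff.1 hS).kronecker hcoord).submatrix
    fun u : (X × A) × Q => ((u.1.1, u.2), u.1.2)
  refine ⟨_, hD, (posSemidef_conjTranspose_mul_self _).add hD, fun x x' => ?_⟩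
  simp only [submatrix_add, Pi.add_apply, Finset.sum_add_distrib, sum_block_krausRow_gram]
  ext f g
  simp only [Matrix.add_apply, Matrix.sum_apply, submatrix_apply, kroneckerMap_apply,
    diagonal_apply_eq, ← Finset.mul_sum, Finset.sum_pi_single', Finset.mem_univ, if_true, mul_one,
    Matrix.sub_apply, add_sub_cancel]
  by_cases hx : x = x' <;> simp [hx, Matrix.one_apply]

variable [Fintype X] [Fintype Y] [Fintype B]

theorem pairing_entangledAmplitude (g : (X × A) × (Y × B) → ℂ) (ω : Q → ℝ)
    (S : Matrix (A × Q) (X × Q) ℂ) (S' : Matrix (B × Q) (Y × Q) ℂ) :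
    pairing g (entangledAmplitude ω S S') = schmidtState ω ⬝ᵥ
      ((krausRow S ⊗ₖ krausRow S').submatrix id (Equiv.prodProdProdComm (X × A) (Y × B) Q Q) *ᵥ
        fun q => g q.1 * schmidtState ω q.2) := by
  have hmulVec (f : Q) : ((krausRow S ⊗ₖ krausRow S').submatrix id
      (Equiv.prodProdProdComm (X × A) (Y × B) Q Q) *ᵥ fun q => g q.1 * schmidtState ω q.2) (f, f) =
      ∑ v, g v * ∑ f', ω f' * (S (v.1.2, f) (v.1.1, f') * S' (v.2.2, f) (v.2.1, f')) := by
    rw [mulVec, dotProduct, Fintype.sum_prod_type]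
    refine Finset.sum_congr rfl fun v _ => ?_
    rw [← schmidtState_dotProduct ω fun q : Q × Q =>
      S (v.1.2, f) (v.1.1, q.1) * S' (v.2.2, f) (v.2.1, q.2), dotProduct, Finset.mul_sum]
    refine Finset.sum_congr rfl fun q _ => ?_
    rw [submatrix_apply, kroneckerMap_apply, mul_comm, mul_assoc]
    rfl
  simp only [schmidtState_dotProduct, hmulVec, pairing_apply, entangledAmplitude_apply,
    Finset.mul_sum]
  rw [Finset.sum_comm]
  refine Finset.sum_congr rfl fun f _ => Finset.sum_congr rfl fun v _ =>
    Finset.sum_congr rfl fun f' _ => ?_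
  ring

theorem norm_pairing_entangledAmplitude_sq_le (g : (X × A) × (Y × B) → ℂ) {ω : Q → ℝ}
    (hω : ∑ f, ω f ^ 2 = 1) (S : Matrix (A × Q) (X × Q) ℂ) (S' : Matrix (B × Q) (Y × Q) ℂ) :
    ((‖pairing g (entangledAmplitude ω S S')‖ ^ 2 : ℝ) : ℂ) ≤
      star g ⬝ᵥ (correlationMatrix ((krausRow S)ᴴ * krausRow S) ((krausRow S')ᴴ * krausRow S')
        (schmidtState ω) *ᵥ g) := by
  set Z := (krausRow S ⊗ₖ krausRow S').submatrix id (Equiv.prodProdProdComm (X × A) (Y × B) Q Q)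
  have hgram : (((krausRow S)ᴴ * krausRow S) ⊗ₖ ((krausRow S')ᴴ * krausRow S')).submatrix
      (Equiv.prodProdProdComm (X × A) (Y × B) Q Q) (Equiv.prodProdProdComm (X × A) (Y × B) Q Q) =
      Zᴴ * Z := by
    rw [mul_kronecker_mul, ← conjTranspose_kronecker]
    rfl
  rw [correlationMatrix, dotProduct_compression_mulVec, hgram,
    star_dotProduct_conjTranspose_mul_self_mulVec, Complex.real_le_real, pairing_entangledAmplitude]
  refine (norm_dotProduct_sq_le _ _).trans_eq ?_
  rw [sum_norm_sq_schmidtState, hω, one_mul]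

end KrausRow

section Rounding

variable {X Y A B : Type} [Fintype X] [Fintype Y] [Fintype A] [Fintype B] [Nonempty A] [Nonempty B]
  [DecidableEq X] [DecidableEq Y]

theorem exists_isQCorrelation_norm_pairing_sq_le {Q : Type*} [Fintype Q] [DecidableEq Q]
    (g : (X × A) × (Y × B) → ℂ) {ω : Q → ℝ} (hω : ∑ f, ω f ^ 2 = 1)
    {S : Matrix (A × Q) (X × Q) ℂ} (hS : Sᴴ * S ≤ 1) {S' : Matrix (B × Q) (Y × Q) ℂ}
    (hS' : S'ᴴ * S' ≤ 1) :
    ∃ Γ : Matrix (X × Y) (X × Y) ℂ →ₗ[ℂ] Matrix (A × B) (A × B) ℂ, IsQCorrelation Γ ∧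
      ((‖pairing g (entangledAmplitude ω S S')‖ ^ 2 : ℝ) : ℂ) ≤
        star g ⬝ᵥ (choiMatrix Γ *ᵥ g) := by
  obtain ⟨D, hD, hE⟩ := exists_isStochasticBlockMatrix_krausRow_gram_add hS
  obtain ⟨D', hD', hF⟩ := exists_isStochasticBlockMatrix_krausRow_gram_add hS'
  refine ⟨_, isQCorrelation_ofChoiMatrix hE hF (ψ := schmidtState ω)
    (by rw [sum_norm_sq_schmidtState, hω]), ?_⟩
  rw [choiMatrix_ofChoiMatrix, correlationMatrix_add_left, correlationMatrix_add_right, add_assoc,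
    add_mulVec, dotProduct_add]
  refine (norm_pairing_entangledAmplitude_sq_le g hω S S').trans (le_add_of_nonneg_right ?_)
  exact ((posSemidef_correlationMatrix (posSemidef_conjTranspose_mul_self _) hD' _).add
    (posSemidef_correlationMatrix hD hF.posSemidef _)).dotProduct_mulVec_nonneg g

theorem IsFeasible.norm_pairing_gameVector_le [DecidableEq A] [DecidableEq B] {HR : Type*}
    [NormedAddCommGroup HR] [InnerProductSpace ℂ HR] {C : Matrix (X × A) (Y × B) ℂ}
    (hC : IsFeasible C) (ξ : X × Y → HR) (n : ℕ) (γ : Fin n → (A × B → HR)) (k : Fin n) :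
    ‖pairing (gameVector ξ (γ k)) C‖ ≤ 2 * √(quantumValue ξ n γ) := by
  refine hC.norm_apply_le_two_mul fun ω hω S S' hS hS' => Real.le_sqrt_of_sq_le ?_
  obtain ⟨Γ, hΓ, hle⟩ :=
    exists_isQCorrelation_norm_pairing_sq_le (gameVector ξ (γ k)) hω hS hS'
  exact Complex.real_le_real.1 (hle.trans (hΓ.dotProduct_choiMatrix_le_quantumValue k))

end Rounding

/-! ### Commuting strategies -/

section BlockOperator

variable {I J K H : Type*} [Fintype J] [NormedAddCommGroup H] [InnerProductSpace ℂ H]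

/-- The operator `H^J → H^I` between Hilbert space direct sums with a given matrix of blocks. -/
noncomputable def blockOperator (M : Matrix I J (H →L[ℂ] H)) :
    PiLp 2 (fun _ : J => H) →L[ℂ] PiLp 2 (fun _ : I => H) :=
  (PiLp.continuousLinearEquiv 2 ℂ fun _ : I => H).symm ∘L
    ContinuousLinearMap.pi fun i => ∑ j, M i j ∘L PiLp.proj 2 (fun _ : J => H) j

theorem blockOperator_apply (M : Matrix I J (H →L[ℂ] H)) (v : PiLp 2 fun _ : J => H) (i : I) :
    blockOperator M v i = ∑ j, M i j (v j) := by
  simp [blockOperator, _root_.sum_apply]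

theorem blockOperator_injective :
    Function.Injective (blockOperator : Matrix I J (H →L[ℂ] H) → _) := by
  classical
  intro M N h
  ext i j x
  have hentry (L : Matrix I J (H →L[ℂ] H)) : blockOperator L (PiLp.single 2 j x) i = L i j x := by
    rw [blockOperator_apply, Finset.sum_eq_single j (fun k _ hk => by simp [hk]) (by simp),
      PiLp.single_eq_same]
  rw [← hentry M, h, hentry]

theorem blockOperator_surjective :
    Function.Surjective (blockOperator : Matrix I J (H →L[ℂ] H) → _) := by
  classical
  intro R
  refine ⟨Matrix.of fun i j => PiLp.proj 2 (fun _ : I => H) i ∘L R ∘L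
    (PiLp.continuousLinearEquiv 2 ℂ fun _ : J => H).symm ∘L
      ContinuousLinearMap.single ℂ (fun _ : J => H) j, ?_⟩
  ext v i
  have hv : ∑ j, PiLp.single 2 j (v j) = v := by
    ext j
    simp
  conv_rhs => rw [← hv, map_sum]
  simp [blockOperator_apply]

theorem blockOperator_mul [Fintype K] (M : Matrix I J (H →L[ℂ] H)) (N : Matrix J K (H →L[ℂ] H)) :
    blockOperator (M * N) = blockOperator M ∘L blockOperator N := by
  ext v i
  simp only [blockOperator_apply, ContinuousLinearMap.comp_apply, Matrix.mul_apply,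
    _root_.sum_apply, map_sum, ContinuousLinearMap.mul_def]
  exact Finset.sum_comm

variable [Fintype I]

theorem inner_blockOperator_apply (M : Matrix I J (H →L[ℂ] H)) (w : PiLp 2 fun _ : I => H)
    (v : PiLp 2 fun _ : J => H) :
    ⟪w, blockOperator M v⟫ = ∑ i, ∑ j, ⟪w i, M i j (v j)⟫ := by
  simp only [PiLp.inner_apply, blockOperator_apply, inner_sum]

theorem blockOperator_one [DecidableEq I] :
    blockOperator (1 : Matrix I I (H →L[ℂ] H)) = ContinuousLinearMap.id ℂ _ := by
  ext v i
  rw [blockOperator_apply, Finset.sum_eq_single i (fun j _ hj => by simp [Matrix.one_apply_ne' hj])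
    (by simp)]
  simp

theorem blockOperator_nonneg {E : Matrix I I (H →L[ℂ] H)}
    (hE : ∀ v : I → H, 0 ≤ ∑ i, ∑ j, ⟪v i, E i j (v j)⟫) : 0 ≤ blockOperator E := by
  refine nonneg_iff_isPositive _ |>.2 ((isPositive_iff_complex _).2 fun v => ?_)
  have hnonneg : 0 ≤ ⟪blockOperator E v, v⟫ := by
    rw [← inner_conj_symm, ← Complex.star_def, star_nonneg_iff, inner_blockOperator_apply]
    exact hE v
  exact ⟨(Complex.eq_re_of_ofReal_le (r := 0) (by simpa using hnonneg)).symm,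
    (Complex.nonneg_iff.1 hnonneg).1⟩

theorem commute_blockOperator_scalar_iff [DecidableEq I] {M : Matrix I I (H →L[ℂ] H)}
    {D : H →L[ℂ] H} :
    Commute (blockOperator M) (blockOperator (Matrix.scalar I D)) ↔ ∀ i j, Commute (M i j) D := by
  calc Commute (blockOperator M) (blockOperator (Matrix.scalar I D))
      ↔ M * Matrix.scalar I D = Matrix.scalar I D * M := by
        rw [← blockOperator_injective.eq_iff, blockOperator_mul, blockOperator_mul]
        rfl
    _ ↔ ∀ i j, Commute (M i j) D := by
        simp only [← Matrix.ext_iff, scalar_apply, mul_diagonal, diagonal_mul]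
        rfl

variable [CompleteSpace H]

theorem blockOperator_conjTranspose (M : Matrix I J (H →L[ℂ] H)) :
    blockOperator Mᴴ = adjoint (blockOperator M) := by
  refine (eq_adjoint_iff _ _).2 fun w v => ?_
  rw [← inner_conj_symm, inner_blockOperator_apply, inner_blockOperator_apply, Finset.sum_comm]
  simp only [map_sum, inner_conj_symm, conjTranspose_apply, star_eq_adjoint, adjoint_inner_left]

theorem exists_conjTranspose_mul_self_eq {E : Matrix I I (H →L[ℂ] H)}
    (hE : ∀ v : I → H, 0 ≤ ∑ i, ∑ j, ⟪v i, E i j (v j)⟫) :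
    ∃ V : Matrix I I (H →L[ℂ] H), Vᴴ * V = E ∧
      ∀ D : H →L[ℂ] H, (∀ i j, Commute (E i j) D) → ∀ i j, Commute (V i j) D := by
  classical
  have hpos := blockOperator_nonneg hE
  obtain ⟨V, hV⟩ := blockOperator_surjective (CFC.sqrt (blockOperator E))
  refine ⟨V, blockOperator_injective ?_, fun D hD => ?_⟩
  · rw [blockOperator_mul, blockOperator_conjTranspose, hV,
      (IsSelfAdjoint.of_nonneg (CFC.sqrt_nonneg _)).adjoint_eq]
    exact CFC.sqrt_mul_sqrt_self _ hpos
  · rw [← commute_blockOperator_scalar_iff, hV]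
    exact (commute_blockOperator_scalar_iff.2 hD).cfcₙ_nnreal NNReal.sqrt

theorem sum_norm_sq_adjoint_apply_le [DecidableEq J] {W : Matrix I J (H →L[ℂ] H)}
    (hW : Wᴴ * W = 1) (w : I → H) :
    ∑ j, ‖∑ i, adjoint (W i j) (w i)‖ ^ 2 ≤ ∑ i, ‖w i‖ ^ 2 := by
  have hnorm : ‖adjoint (blockOperator W)‖ ≤ 1 := by
    have h := norm_adjoint_comp_self (blockOperator W)
    rw [← blockOperator_conjTranspose, ← blockOperator_mul, hW, blockOperator_one] at h
    rw [LinearIsometryEquiv.norm_map]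
    nlinarith [h ▸ norm_id_le, norm_nonneg (blockOperator W)]
  have happly : ‖adjoint (blockOperator W) (WithLp.toLp 2 w)‖ ≤ ‖WithLp.toLp 2 w‖ :=
    (le_of_opNorm_le _ hnorm _).trans_eq (one_mul _)
  have hsq := pow_le_pow_left₀ (norm_nonneg _) happly 2
  simpa only [← blockOperator_conjTranspose, PiLp.norm_sq_eq_of_L2, blockOperator_apply,
    conjTranspose_apply, star_eq_adjoint] using hsq

end BlockOperator

section CrossGram

variable {I J T H : Type*} [Fintype T] [NormedAddCommGroup H] [InnerProductSpace ℂ H]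

/-- The matrix of inner products `∑ t, ⟪p_t(i), q_t(j)⟫` of two families of vectors in the direct
sum of copies of `H` indexed by `T`. -/
noncomputable def crossGram (p : T → I → H) (q : T → J → H) : Matrix I J ℂ :=
  Matrix.of fun i j => ∑ t, ⟪p t i, q t j⟫

theorem crossGram_apply (p : T → I → H) (q : T → J → H) (i : I) (j : J) :
    crossGram p q i j = ∑ t, ⟪p t i, q t j⟫ :=
  rfl

theorem crossGram_self (p : T → I → H) : crossGram p p = ∑ t, gram ℂ (p t) := by
  ext i j
  rw [crossGram_apply, Matrix.sum_apply]
  rfl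

theorem conjTranspose_crossGram (p : T → I → H) (q : T → J → H) :
    (crossGram p q)ᴴ = crossGram q p := by
  ext j i
  simp only [conjTranspose_apply, crossGram_apply, star_sum, Complex.star_def, inner_conj_symm]

theorem posSemidef_crossGram_self [Finite I] (p : T → I → H) : (crossGram p p).PosSemidef := by
  rw [crossGram_self]
  exact posSemidef_sum _ fun t _ => posSemidef_gram ℂ _

theorem posSemidef_fromBlocks_crossGram [Finite I] [Finite J] (p : T → I → H) (q : T → J → H) :
    (fromBlocks (crossGram p p) (crossGram p q) (crossGram p q)ᴴ (crossGram q q)).PosSemidef := by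
  rw [conjTranspose_crossGram]
  convert posSemidef_crossGram_self fun t => Sum.elim (p t) (q t) using 1
  ext (i | i) (j | j) <;> rfl

theorem star_dotProduct_crossGram_mulVec [Fintype I] (p : T → I → H) (z : I → ℂ) :
    star z ⬝ᵥ (crossGram p p *ᵥ z) = ((∑ t, ‖∑ i, z i • p t i‖ ^ 2 : ℝ) : ℂ) := by
  simp only [crossGram_self, sum_mulVec, dotProduct_sum, star_dotProduct_gram_mulVec,
    inner_self_eq_norm_sq_to_K, Complex.coe_algebraMap, Complex.ofReal_sum, Complex.ofReal_pow]

end CrossGram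

section KrausMatrix

variable {X Y A B S T H : Type*} [Fintype A] [Fintype B] [Fintype S] [Fintype T]
  [DecidableEq X] [DecidableEq Y] [NormedAddCommGroup H] [InnerProductSpace ℂ H] [CompleteSpace H]

/-- Operators `V_{s,(x,a)}` with `∑ s, ∑ a, V_{s,(x,a)}* V_{s,(x',a)} = δ_{x,x'}`, that is, the
blocks of an isometry `ℂ^X ⊗ H → ℂ^S ⊗ ℂ^A ⊗ H`. Then `V* V` is a stochastic operator matrix. -/
def IsKrausMatrix (V : Matrix S (X × A) (H →L[ℂ] H)) : Prop :=
  ∀ x x', ∑ a, (Vᴴ * V) (x, a) (x', a) = if x = x' then 1 else 0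

theorem IsKrausMatrix.conjTranspose_mul_self_eq_one {V : Matrix S (X × A) (H →L[ℂ] H)}
    (hV : IsKrausMatrix V) :
    (Matrix.of fun (k : S × A) (x : X) => V k.1 (x, k.2))ᴴ *
      Matrix.of (fun (k : S × A) (x : X) => V k.1 (x, k.2)) = 1 := by
  ext1 x x'
  rw [Matrix.one_apply, ← hV x x', Matrix.mul_apply, Fintype.sum_prod_type_right]
  rfl

theorem IsKrausMatrix.sum_norm_sq_le [Fintype X] {V : Matrix S (X × A) (H →L[ℂ] H)}
    (hV : IsKrausMatrix V) (r : S → H) (z : A → ℂ) :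
    ∑ x, ‖∑ a, z a • ∑ s, adjoint (V s (x, a)) (r s)‖ ^ 2 ≤
      (∑ s, ‖r s‖ ^ 2) * ∑ a, ‖z a‖ ^ 2 := by
  have h := sum_norm_sq_adjoint_apply_le hV.conjTranspose_mul_self_eq_one
    fun k : S × A => z k.2 • r k.1
  simp only [Fintype.sum_prod_type_right, of_apply, map_smul, norm_smul, mul_pow] at h
  rw [Finset.sum_mul_sum, Finset.sum_comm]
  simpa only [Finset.smul_sum, mul_comm] using h

theorem IsKrausMatrix.partialTraceFst_crossGram_le_one [Fintype X] [DecidableEq A]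
    {V : Matrix S (X × A) (H →L[ℂ] H)} (hV : IsKrausMatrix V) {R : S → T → H}
    (hR : ∑ s, ∑ t, ‖R s t‖ ^ 2 ≤ 1) :
    let p : T → X × A → H := fun t i => ∑ s, adjoint (V s i) (R s t)
    partialTraceFst (crossGram p p) ≤ 1 := by
  intro p
  have htrace : partialTraceFst (crossGram p p) =
      crossGram (fun (u : T × X) a => p u.1 (u.2, a)) fun u a => p u.1 (u.2, a) := by
    ext a a'
    simp only [partialTraceFst_apply, crossGram_apply, Fintype.sum_prod_type]
    exact Finset.sum_comm
  have hbound (z : A → ℂ) : ∑ u : T × X, ‖∑ a, z a • p u.1 (u.2, a)‖ ^ 2 ≤ ∑ a, ‖z a‖ ^ 2 := by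
    rw [Fintype.sum_prod_type]
    calc ∑ t, ∑ x, ‖∑ a, z a • p t (x, a)‖ ^ 2
        ≤ ∑ t, (∑ s, ‖R s t‖ ^ 2) * ∑ a, ‖z a‖ ^ 2 :=
          Finset.sum_le_sum fun t _ => hV.sum_norm_sq_le (fun s => R s t) z
      _ = (∑ s, ∑ t, ‖R s t‖ ^ 2) * ∑ a, ‖z a‖ ^ 2 := by rw [← Finset.sum_mul, Finset.sum_comm]
      _ ≤ ∑ a, ‖z a‖ ^ 2 := mul_le_of_le_one_left (by positivity) hR
  rw [htrace, Matrix.le_iff]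
  refine PosSemidef.of_dotProduct_mulVec_nonneg
    (isHermitian_one.sub (posSemidef_crossGram_self _).isHermitian) fun z => ?_
  rw [sub_mulVec, dotProduct_sub, one_mulVec, star_dotProduct_crossGram_mulVec,
    star_dotProduct_self_eq_sum, sub_nonneg, Complex.real_le_real]
  exact hbound z

theorem IsKrausMatrix.partialTraceSnd_crossGram_eq_one {W : Matrix T (Y × B) (H →L[ℂ] H)}
    (hW : IsKrausMatrix W) {ψ : H} (hψ : ‖ψ‖ = 1) :
    partialTraceSnd (crossGram (fun t j => W t j ψ) fun t j => W t j ψ) = 1 := by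
  ext y y'
  have h := congrArg (fun D : H →L[ℂ] H => ⟪ψ, D ψ⟫) (hW y y')
  simp only [Matrix.mul_apply, conjTranspose_apply, star_eq_adjoint, _root_.sum_apply, inner_sum,
    ContinuousLinearMap.mul_def, ContinuousLinearMap.comp_apply, adjoint_inner_right] at h
  rw [partialTraceSnd_apply, Matrix.one_apply]
  simp only [crossGram_apply, h]
  by_cases hy : y = y' <;> simp [hy, inner_self_eq_norm_sq_to_K, hψ]

end KrausMatrix

section CommutingStrategies

variable {X Y A B S T H : Type*} [Fintype X] [Fintype Y] [Fintype A] [Fintype B] [Fintype S]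
  [Fintype T] [DecidableEq X] [DecidableEq Y] [DecidableEq A] [DecidableEq B]
  [NormedAddCommGroup H] [InnerProductSpace ℂ H] [CompleteSpace H]
  {V : Matrix S (X × A) (H →L[ℂ] H)} {W : Matrix T (Y × B) (H →L[ℂ] H)}

theorem IsKrausMatrix.isFeasible (hV : IsKrausMatrix V) (hW : IsKrausMatrix W)
    (hVW : ∀ s i t j, Commute (V s i) (W t j)) {ψ : H} (hψ : ‖ψ‖ = 1) {R : S → T → H}
    (hR : ∑ s, ∑ t, ‖R s t‖ ^ 2 ≤ 1) :
    IsFeasible (Matrix.of fun i j => ∑ s, ∑ t, ⟪R s t, V s i (W t j ψ)⟫) := by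
  set C : Matrix (X × A) (Y × B) ℂ := Matrix.of fun i j => ∑ s, ∑ t, ⟪R s t, V s i (W t j ψ)⟫
  let p : T → X × A → H := fun t i => ∑ s, adjoint (V s i) (R s t)
  let q : T → Y × B → H := fun t j => W t j ψ
  let p' : S → Y × B → H := fun s j => ∑ t, adjoint (W t j) (R s t)
  let q' : S → X × A → H := fun s i => V s i ψ
  have hC : C = crossGram p q := by
    ext i j
    simp only [C, p, q, of_apply, crossGram_apply, sum_inner, adjoint_inner_left]
    exact Finset.sum_comm
  have hC' : C = (crossGram p' q')ᵀ := by
    ext i j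
    simp only [C, p', q', of_apply, transpose_apply, crossGram_apply, sum_inner,
      adjoint_inner_left]
    refine Finset.sum_congr rfl fun s _ => Finset.sum_congr rfl fun t _ => ?_
    exact congrArg (fun D : H →L[ℂ] H => ⟪R s t, D ψ⟫) (hVW s i t j)
  refine ⟨crossGram p p, (crossGram q' q')ᵀ, (crossGram p' p')ᵀ, crossGram q q, ?_, ?_,
    hV.partialTraceFst_crossGram_le_one hR, ?_, ?_, (hW.partialTraceSnd_crossGram_eq_one hψ).le⟩
  · rw [hC]
    exact posSemidef_fromBlocks_crossGram p q
  · have h := (posSemidef_fromBlocks_crossGram p' q').transpose.submatrix Sum.swap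
    rw [fromBlocks_transpose, fromBlocks_submatrix_sum_swap_sum_swap] at h
    rw [hC']
    exact h
  · rw [partialTraceSnd_transpose, hV.partialTraceSnd_crossGram_eq_one hψ, transpose_one]
  · rw [partialTraceFst_transpose]
    have h := Matrix.le_iff.1 (hW.partialTraceFst_crossGram_le_one (R := fun t s => R s t)
      (by rwa [Finset.sum_comm]))
    simpa only [Matrix.le_iff, transpose_sub, transpose_one] using h.transpose

end CommutingStrategies

section QCCorrelation

variable {X Y A B : Type} [Fintype X] [Fintype Y] [Fintype A] [Fintype B]
  [DecidableEq X] [DecidableEq Y]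
  {Γ : Matrix (X × Y) (X × Y) ℂ →ₗ[ℂ] Matrix (A × B) (A × B) ℂ}

theorem IsStochasticOperatorMatrix.exists_isKrausMatrix {H : Type*} [NormedAddCommGroup H]
    [InnerProductSpace ℂ H] [CompleteSpace H] {E : X → X → A → A → (H →L[ℂ] H)}
    (hE : IsStochasticOperatorMatrix E) :
    ∃ V : Matrix (X × A) (X × A) (H →L[ℂ] H), IsKrausMatrix V ∧
      (∀ i j, (Vᴴ * V) i j = E i.1 j.1 i.2 j.2) ∧
      ∀ D : H →L[ℂ] H, (∀ x x' a a', Commute (E x x' a a') D) → ∀ s i, Commute (V s i) D := by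
  obtain ⟨V, hVE, hVcomm⟩ := exists_conjTranspose_mul_self_eq
    (E := Matrix.of fun i j : X × A => E i.1 j.1 i.2 j.2) hE.1
  refine ⟨V, fun x x' => ?_, fun i j => by rw [hVE, of_apply],
    fun D hD => hVcomm D fun i j => hD _ _ _ _⟩
  rw [hVE]
  exact hE.2 x x'

theorem IsQCCorrelation.exists_choiMatrix_eq (hΓ : IsQCCorrelation Γ) :
    ∃ (ℍ : HilbertC) (ψ : ℍ.carrier) (V : Matrix (X × A) (X × A) (ℍ.carrier →L[ℂ] ℍ.carrier))
      (W : Matrix (Y × B) (Y × B) (ℍ.carrier →L[ℂ] ℍ.carrier)),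
      ‖ψ‖ = 1 ∧ IsKrausMatrix V ∧ IsKrausMatrix W ∧ (∀ s i t j, Commute (V s i) (W t j)) ∧
        choiMatrix Γ = crossGram (fun (r : (X × A) × (Y × B)) v => V r.1 v.1 (W r.2 v.2 ψ))
          fun r v => V r.1 v.1 (W r.2 v.2 ψ) := by
  obtain ⟨ℍ, ψ, E, F, hψ, hE, hF, hEF, hΓ⟩ := hΓ
  obtain ⟨V, hV, hVE, hVcomm⟩ := hE.exists_isKrausMatrix
  obtain ⟨W, hW, hWF, hWcomm⟩ := hF.exists_isKrausMatrix
  have hVF (s i y y' b b') : Commute (V s i) (F y y' b b') :=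
    hVcomm _ (fun x x' a a' => hEF x x' y y' a a' b b') s i
  have hVW (s i t j) : Commute (V s i) (W t j) :=
    (hWcomm _ (fun y y' b b' => (hVF s i y y' b b').symm) t j).symm
  have hswap {D D' : ℍ.carrier →L[ℂ] ℍ.carrier} (h : Commute D D') (φ : ℍ.carrier) :
      D (D' φ) = D' (D φ) :=
    congrArg (fun f : ℍ.carrier →L[ℂ] ℍ.carrier => f φ) h
  refine ⟨ℍ, ψ, V, W, hψ, hV, hW, hVW, ?_⟩
  ext u v
  rw [choiMatrix_apply, hΓ, of_apply, crossGram_apply, Fintype.sum_prod_type, ← hVE u.1 v.1]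
  simp only [Matrix.mul_apply, conjTranspose_apply, star_eq_adjoint, ContinuousLinearMap.comp_apply,
    _root_.sum_apply, ContinuousLinearMap.mul_def, inner_sum, adjoint_inner_right]
  refine Finset.sum_congr rfl fun s _ => ?_
  rw [hswap (hVF s _ _ _ _ _), ← hWF u.2 v.2]
  simp only [Matrix.mul_apply, conjTranspose_apply, star_eq_adjoint, ContinuousLinearMap.comp_apply,
    _root_.sum_apply, ContinuousLinearMap.mul_def, inner_sum, adjoint_inner_right]
  refine Finset.sum_congr rfl fun t _ => ?_
  rw [hswap (hVW _ _ _ _), hswap (hVW _ _ _ _)]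

theorem IsQCCorrelation.exists_isFeasible [DecidableEq A] [DecidableEq B]
    (hΓ : IsQCCorrelation Γ) (g : (X × A) × (Y × B) → ℂ) :
    ∃ C, IsFeasible C ∧
      star g ⬝ᵥ (choiMatrix Γ *ᵥ g) = ((‖pairing g C‖ ^ 2 : ℝ) : ℂ) := by
  obtain ⟨ℍ, ψ, V, W, hψ, hV, hW, hVW, hchoi⟩ := hΓ.exists_choiMatrix_eq
  let r (s : X × A) (t : Y × B) : ℍ.carrier := ∑ v, g v • V s v.1 (W t v.2 ψ)
  let val : ℝ := ∑ s, ∑ t, ‖r s t‖ ^ 2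
  have hval : 0 ≤ val := by positivity
  let R (s : X × A) (t : Y × B) : ℍ.carrier := (((√val)⁻¹ : ℝ) : ℂ) • r s t
  have hR : ∑ s, ∑ t, ‖R s t‖ ^ 2 ≤ 1 := by
    simp only [R, norm_smul, mul_pow, ← Finset.mul_sum, Complex.norm_real, norm_inv, inv_pow,
      Real.norm_eq_abs, sq_abs, Real.sq_sqrt hval]
    exact inv_mul_le_one
  refine ⟨_, hV.isFeasible hW hVW hψ hR, ?_⟩
  have hpairing : pairing g (Matrix.of fun i j => ∑ s, ∑ t, ⟪R s t, V s i (W t j ψ)⟫) =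
      ((√val : ℝ) : ℂ) :=
    calc pairing g (Matrix.of fun i j => ∑ s, ∑ t, ⟪R s t, V s i (W t j ψ)⟫)
        = ∑ s, ∑ t, ⟪R s t, r s t⟫ := by
          simp only [pairing_apply, of_apply, r, inner_sum, inner_smul_right, Finset.mul_sum]
          rw [Finset.sum_comm]
          exact Finset.sum_congr rfl fun s _ => Finset.sum_comm
      _ = (((√val)⁻¹ * val : ℝ) : ℂ) := by
          simp only [R, val, inner_smul_left, Complex.conj_ofReal, inner_self_eq_norm_sq_to_K,
            Finset.mul_sum, Complex.ofReal_mul, Complex.ofReal_sum, Complex.ofReal_pow,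
            Complex.coe_algebraMap]
      _ = ((√val : ℝ) : ℂ) := by rw [inv_mul_eq_div, Real.div_sqrt]
  rw [hpairing, hchoi, star_dotProduct_crossGram_mulVec, Fintype.sum_prod_type, Complex.norm_real,
    Real.norm_eq_abs, sq_abs, Real.sq_sqrt hval]

end QCCorrelation

theorem IsQCCorrelation.dotProduct_choiMatrix_le
    {X Y A B : Type} [Fintype X] [Fintype Y] [Fintype A] [Fintype B] [Nonempty A] [Nonempty B]
    [DecidableEq X] [DecidableEq Y] {HR : Type*} [NormedAddCommGroup HR] [InnerProductSpace ℂ HR]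
    {Γ : Matrix (X × Y) (X × Y) ℂ →ₗ[ℂ] Matrix (A × B) (A × B) ℂ} (hΓ : IsQCCorrelation Γ)
    (ξ : X × Y → HR) (n : ℕ) (γ : Fin n → (A × B → HR)) (k : Fin n) :
    star (gameVector ξ (γ k)) ⬝ᵥ (choiMatrix Γ *ᵥ gameVector ξ (γ k)) ≤
      ((4 * quantumValue ξ n γ : ℝ) : ℂ) := by
  classical
  obtain ⟨C, hC, hval⟩ := hΓ.exists_isFeasible (gameVector ξ (γ k))
  rw [hval, Complex.real_le_real]
  calc ‖pairing (gameVector ξ (γ k)) C‖ ^ 2 ≤ (2 * √(quantumValue ξ n γ)) ^ 2 := by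
        gcongr
        exact hC.norm_pairing_gameVector_le ξ n γ k
    _ = 4 * quantumValue ξ n γ := by
        rw [mul_pow, Real.sq_sqrt (quantumValue_nonneg ξ n γ)]
        norm_num

theorem statement14_general
    {X Y A B : Type} [Fintype X] [Fintype Y] [Fintype A] [Fintype B] [Nonempty A] [Nonempty B]
    [DecidableEq X] [DecidableEq Y] {HR : Type*} [NormedAddCommGroup HR] [InnerProductSpace ℂ HR]
    (ξ : X × Y → HR) (n : ℕ) (γ : Fin n → (A × B → HR)) :
    sSup {t : ℝ | ∃ Γ, IsQCCorrelation Γ ∧ (t : ℂ) = gameValue Γ ξ n γ}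
      ≤ 4 * n * sSup {t : ℝ | ∃ Γ, IsQCorrelation Γ ∧ (t : ℂ) = gameValue Γ ξ n γ} := by
  refine Real.sSup_le ?_ (mul_nonneg (by positivity) (quantumValue_nonneg ξ n γ))
  rintro t ⟨Γ, hΓ, ht⟩
  have hsum : (t : ℂ) ≤ ((∑ _k : Fin n, 4 * quantumValue ξ n γ : ℝ) : ℂ) := by
    rw [ht, gameValue_eq_sum_dotProduct, Complex.ofReal_sum]
    exact Finset.sum_le_sum fun k _ => hΓ.dotProduct_choiMatrix_le ξ n γ k
  calc t ≤ ∑ _k : Fin n, 4 * quantumValue ξ n γ := Complex.real_le_real.1 hsum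
    _ = 4 * n * quantumValue ξ n γ := by
        rw [Finset.sum_const, Finset.card_univ, Fintype.card_fin, nsmul_eq_mul]
        ring

end

/-- For a projection quantum game with rank-`n` projection, the
quantum commuting value is at most `4 n` times the quantum value. -/
theorem statement14
    {X Y A B : Type} [Fintype X] [Fintype Y] [Fintype A] [Fintype B]
    [Nonempty X] [Nonempty Y] [Nonempty A] [Nonempty B]
    [DecidableEq X] [DecidableEq Y] [DecidableEq A] [DecidableEq B]
    {HR : Type*} [NormedAddCommGroup HR] [InnerProductSpace ℂ HR] [CompleteSpace HR]
    [TopologicalSpace.SeparableSpace HR]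
    (ξ : X × Y → HR) (hξ : ∑ w : X × Y, ‖ξ w‖ ^ 2 = 1)
    (n : ℕ) (hn : 1 ≤ n)
    (γ : Fin n → (A × B → HR))
    (hγ : ∀ k l : Fin n,
      ∑ p : A × B, (⟪γ k p, γ l p⟫ : ℂ) = if k = l then 1 else 0) :
    sSup {t : ℝ | ∃ Γ, IsQCCorrelation Γ ∧ (t : ℂ) = gameValue Γ ξ n γ}
      ≤ 4 * n * sSup {t : ℝ | ∃ Γ, IsQCorrelation Γ ∧ (t : ℂ) = gameValue Γ ξ n γ} :=
  statement14_general ξ n γ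
end
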